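/- Let R = k[x_1,…,x_d] with d ≥ 3 and let E be a torsion-free R-module of rank e and projective dimension one with μ(E) = d+e, minimal free resolution 0 → R^d →φ R^{d+e} → E → 0 where φ = [φ′ | φ″] with φ′ having d−2 columns of linear forms and φ″ two columns of quadrics, I_1(φ) = (x_1,…,x_d), and E satisfying G_d. Let A = H^0_m(S(E)) be the ideal with R(E) ≅ S(E)/A, m = (x_1,…,x_d). Then the T-module A_2 is generated by det B(φ), where B(φ) is a Jacobian dual of φ with respect to x_1,…,x_d, and this generator has bidegree (2,d). -/

import Mathlib

/-!
STATEMENT 9: With `R`, `E`, `φ` as in Statement 7 and `A = H⁰_m(S(E))` the ideal with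
`R(E) ≅ S(E)/A`, the `T`-module `A_2` is generated by `det B(φ)` for `B(φ)` a Jacobian
dual of `φ` with respect to `x_1,…,x_d`, and this generator has bidegree `(2,d)`.
-/

open MvPolynomial

noncomputable section

namespace Stmt9

variable (k : Type) [Field k] (d n : ℕ)

/-- `B = R ⊗_k T = k[x_1,…,x_d,y_1,…,y_n]`. -/
abbrev B := MvPolynomial (Fin d ⊕ Fin n) k

/-- `T = k[y_1,…,y_n]`. -/
abbrev T := MvPolynomial (Fin n) k

/-- `B` is a `T`-algebra via `y_j ↦ y_j`. -/
instance : Algebra (T k n) (B k d n) :=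
  ((rename Sum.inr : T k n →ₐ[k] B k d n).toRingHom).toAlgebra

/-- The bigrading weight: `bideg x_i = (1,0)`, `bideg y_j = (0,1)`. -/
def bwt : (Fin d ⊕ Fin n) → ℕ × ℕ := Sum.elim (fun _ => (1, 0)) (fun _ => (0, 1))

/-- The `x`-degree weight. -/
def wx : (Fin d ⊕ Fin n) → ℕ := Sum.elim (fun _ => 1) (fun _ => 0)

/-- The ideal `m = (x_1,…,x_d)B`. -/
def mxB : Ideal (B k d n) := Ideal.span (Set.range fun i : Fin d => (X (Sum.inl i) : B k d n))

variable (I : Ideal (B k d n))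

/-- `A = H⁰_m(S)`: elements of `S = B/I` annihilated by a power of `m`. -/
def H0 : Submodule (B k d n) (B k d n ⧸ I) :=
  ⨆ N : ℕ, Submodule.torsionBySet (B k d n) (B k d n ⧸ I)
    ((mxB k d n ^ N : Ideal (B k d n)) : Set (B k d n))

/-- The bigraded component of `S = B/I` in bidegree `p`. -/
def Scomp (p : ℕ × ℕ) : Submodule k (B k d n ⧸ I) :=
  (weightedHomogeneousSubmodule k (bwt d n) p).map (Ideal.Quotient.mkₐ k I).toLinearMap

/-- The graded strand `S_j = ⊕_b S_{(j,b)}` of `S` in `x`-degree `j`, as a `T`-module. -/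
def SxDeg (j : ℕ) : Submodule (T k n) (B k d n ⧸ I) :=
  Submodule.span (T k n) ((Ideal.Quotient.mk I) '' {g : B k d n | g.IsWeightedHomogeneous (wx d n) j})

/-- The graded strand of `S` in (possibly negative) `x`-degree `i : ℤ`. -/
def SxDegZ (i : ℤ) : Submodule (T k n) (B k d n ⧸ I) :=
  if 0 ≤ i then SxDeg k d n I i.toNat else ⊥

/-- The graded strand `A_i = ⊕_b A_{(i,b)}` of `A = H⁰_m(S)`, as a `T`-module. -/
def AcompZ (i : ℤ) : Submodule (T k n) (B k d n ⧸ I) :=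
  (H0 k d n I).restrictScalars (T k n) ⊓ SxDegZ k d n I i

/-- The graded component of `T` in (possibly negative) degree `j`. -/
def TcompZ (j : ℤ) : Submodule k (T k n) :=
  if 0 ≤ j then homogeneousSubmodule (Fin n) k j.toNat else ⊥

/-- The ideal of `t × t` minors of a matrix. -/
def minorsIdeal {R : Type} [CommRing R] {m' n' : Type} (M : Matrix m' n' R) (t : ℕ) :
    Ideal R :=
  Ideal.span {x | ∃ (f : Fin t → m') (g : Fin t → n'), x = (M.submatrix f g).det}

/-- `ht I ≥ c`: every prime containing `I` has height (= dimension of the localization)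
at least `c`. -/
def htGE {R : Type} [CommRing R] (I : Ideal R) (c : ℕ) : Prop :=
  ∀ (p : Ideal R) (_ : p.IsPrime), I ≤ p →
    (c : WithBot ℕ∞) ≤ ringKrullDim (Localization.AtPrime p)

section Koszul
open ExteriorAlgebra

/-- The ideal generated by the first `j` elements of a sequence. -/
def JJ {A : Type*} [CommRing A] (a : ℕ → A) (j : ℕ) : Ideal A := Ideal.span (a '' Set.Iio j)

/-- Regularity of the first `n` elements of a sequence. -/
def Reg {A : Type*} [CommRing A] (a : ℕ → A) (n : ℕ) : Prop :=
  ∀ j < n, ∀ z, a j * z ∈ JJ a j → z ∈ JJ a j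

variable {A : Type*} [CommRing A]

lemma JJ_zero (a : ℕ → A) : JJ a 0 = ⊥ := by simp [JJ]

lemma JJ_succ (a : ℕ → A) (j : ℕ) : JJ a (j + 1) = JJ a j ⊔ Ideal.span {a j} := by
  have : Set.Iio (j + 1) = Set.Iio j ∪ {j} := by
    ext i; simp
  rw [JJ, JJ, this, Set.image_union, Ideal.span_union, Set.image_singleton]

lemma mem_JJ_succ_smul {M : Type*} [AddCommGroup M] [Module A M] (a : ℕ → A) (j : ℕ)
    (N : Submodule A M) (m : M) :
    m ∈ JJ a (j + 1) • N ↔ ∃ η ∈ N, m - a j • η ∈ JJ a j • N := by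
  rw [JJ_succ, Submodule.sup_smul, Submodule.ideal_span_singleton_smul, Submodule.mem_sup]
  constructor
  · rintro ⟨y, hy, z, hz, rfl⟩
    obtain ⟨η, hη, rfl⟩ := (Submodule.mem_smul_pointwise_iff_exists _ _ _).1 hz
    exact ⟨η, hη, by simpa using hy⟩
  · rintro ⟨η, hη, h⟩
    exact ⟨_, h, a j • η, Submodule.smul_mem_pointwise_smul _ _ _ hη, by simp⟩

lemma reg_smul_free {M : Type*} [AddCommGroup M] [Module A M] [Module.Free A M]
    (J : Ideal A) (r : A) (h : ∀ z, r * z ∈ J → z ∈ J) (m : M)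
    (hm : r • m ∈ J • (⊤ : Submodule A M)) : m ∈ J • (⊤ : Submodule A M) := by
  classical
  let b := Module.Free.chooseBasis A M
  have key : ∀ y ∈ J • (⊤ : Submodule A M), ∀ i, b.repr y i ∈ J := by
    intro y hy i
    refine Submodule.smul_induction_on hy ?_ ?_
    · intro r hr n _
      simp [Ideal.mul_mem_right _ _ hr]
    · intro x y hx hy
      simp [Ideal.add_mem _ hx hy]
  have h2 : ∀ i, b.repr m i ∈ J := fun i => h _ (by simpa using key _ hm i)
  rw [← b.linearCombination_repr m, Finsupp.linearCombination_apply]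
  exact Submodule.sum_mem _ fun i _ => Submodule.smul_mem_smul (h2 i) trivial

variable {n : ℕ}

/-- abbreviation for the exterior algebra -/
abbrev Lam (A : Type*) [CommRing A] (n : ℕ) := ExteriorAlgebra A (Fin n → A)

/-- graded pieces -/
abbrev Lm (A : Type*) [CommRing A] (n i : ℕ) : Submodule A (Lam A n) :=
  exteriorPower A i (Fin n → A)

lemma reg_smul_Lm (i : ℕ) (J : Ideal A) (r : A) (h : ∀ z, r * z ∈ J → z ∈ J) (m : Lam A n)
    (hm0 : m ∈ Lm A n i) (hm : r • m ∈ J • Lm A n i) : m ∈ J • Lm A n i := by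
  have := reg_smul_free (M := Lm A n i) J r h ⟨m, hm0⟩
    ((Submodule.mem_smul_top_iff _ _ _).2 (by simpa using hm))
  simpa using (Submodule.mem_smul_top_iff _ _ _).1 this

/-- left wedge -/
def wd (x : Fin n → A) : Lam A n →ₗ[A] Lam A n := LinearMap.mulLeft A (ι A x)

lemma wd_apply (x : Fin n → A) (z : Lam A n) : wd x z = ι A x * z := rfl

lemma wd_wd (x : Fin n → A) (z : Lam A n) : wd x (wd x z) = 0 := by
  rw [wd_apply, wd_apply, ← mul_assoc, ι_sq_zero, zero_mul]

/-- dual vector -/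
def dl : (Fin n → A) →ₗ[A] Module.Dual A (Fin n → A) :=
  Matrix.toLinearMap₂' A (1 : Matrix (Fin n) (Fin n) A)

lemma dl_apply (b v : Fin n → A) : dl b v = ∑ i, b i * v i := by
  simp [dl, Matrix.toLinearMap₂'_apply', dotProduct]

/-- contraction -/
def ct (b : Fin n → A) : Lam A n →ₗ[A] Lam A n :=
  CliffordAlgebra.contractLeft (Q := (0 : QuadraticForm A (Fin n → A))) (dl b)

lemma ct_wd (b x : Fin n → A) (z : Lam A n) :
    ct b (wd x z) = (∑ i, b i * x i) • z - wd x (ct b z) := by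
  rw [← dl_apply]
  exact CliffordAlgebra.contractLeft_ι_mul (Q := (0 : QuadraticForm A (Fin n → A))) (dl b) x z

lemma ct_algebraMap (b : Fin n → A) (r : A) : ct b (algebraMap A (Lam A n) r) = 0 :=
  CliffordAlgebra.contractLeft_algebraMap (Q := (0 : QuadraticForm A (Fin n → A))) (dl b) r

lemma ct_ct (b : Fin n → A) (z : Lam A n) : ct b (ct b z) = 0 :=
  CliffordAlgebra.contractLeft_contractLeft (Q := (0 : QuadraticForm A (Fin n → A))) (dl b) z

lemma Lm_zero_mem (z : Lam A n) (h : z ∈ Lm A n 0) : ∃ r, z = algebraMap A _ r := by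
  simp only [Lm, exteriorPower, pow_zero] at h
  obtain ⟨r, hr⟩ := Submodule.mem_one.1 h
  exact ⟨r, hr.symm⟩

lemma ct_zero (b : Fin n → A) (z : Lam A n) (h : z ∈ Lm A n 0) : ct b z = 0 := by
  obtain ⟨r, rfl⟩ := Lm_zero_mem z h
  exact ct_algebraMap b r

lemma wd_mem (x : Fin n → A) (i : ℕ) (z : Lam A n) (h : z ∈ Lm A n i) :
    wd x z ∈ Lm A n (i + 1) := by
  simp only [Lm, exteriorPower] at h ⊢
  rw [pow_succ']
  exact Submodule.mul_mem_mul ⟨x, rfl⟩ h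

lemma Lm_succ_induct (i : ℕ) {p : Lam A n → Prop} (h0 : ∀ x z, z ∈ Lm A n i → p (wd x z))
    (hadd : ∀ y z, p y → p z → p (y + z)) (z : Lam A n) (hz : z ∈ Lm A n (i + 1)) : p z := by
  simp only [Lm, exteriorPower] at hz
  rw [pow_succ'] at hz
  refine Submodule.mul_induction_on hz ?_ hadd
  rintro _ ⟨x, rfl⟩ z hz
  exact h0 x z hz

lemma ct_mem (b : Fin n → A) (i : ℕ) : ∀ z ∈ Lm A n (i + 1), ct b z ∈ Lm A n i := by
  induction i with
  | zero =>
    refine Lm_succ_induct 0 ?_ ?_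
    · intro x z hz
      rw [ct_wd, ct_zero b z hz]
      simpa using Submodule.smul_mem _ _ hz
    · intro y z hy hz
      rw [map_add]; exact add_mem hy hz
  | succ i ih =>
    refine Lm_succ_induct (i + 1) ?_ ?_
    · intro x z hz
      rw [ct_wd]
      exact sub_mem (Submodule.smul_mem _ _ hz) (wd_mem _ _ _ (ih z hz))
    · intro y z hy hz
      rw [map_add]; exact add_mem hy hz

lemma map_smul_mem (f : Lam A n →ₗ[A] Lam A n) (J : Ideal A) (N N' : Submodule A (Lam A n))
    (h : ∀ z ∈ N, f z ∈ N') (z : Lam A n) (hz : z ∈ J • N) : f z ∈ J • N' := by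
  have h1 : f z ∈ (J • N).map f := Submodule.mem_map_of_mem hz
  rw [Submodule.map_smul''] at h1
  exact Submodule.smul_mono le_rfl (Submodule.map_le_iff_le_comap.2 h) h1

/-- boundaries -/
def Bd (x : Fin n → A) : ℕ → Submodule A (Lam A n)
  | 0 => ⊥
  | i + 1 => (Lm A n i).map (wd x)

lemma Bd_le (x : Fin n → A) (i : ℕ) : Bd x i ≤ Lm A n i := by
  cases i with
  | zero => simp [Bd]
  | succ i =>
    rintro _ ⟨z, hz, rfl⟩
    exact wd_mem x i z hz

lemma wd_Bd (x : Fin n → A) (i : ℕ) (z) (hz : z ∈ Bd x i) : wd x z = 0 := by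
  cases i with
  | zero => simp only [Bd, Submodule.mem_bot] at hz; simp [hz]
  | succ i =>
    obtain ⟨z, hz, rfl⟩ := hz
    exact wd_wd x z

/-- vanishing of `H^i(x; A/(a_1..a_j))`. -/
def HV (x : Fin n → A) (a : ℕ → A) (j i : ℕ) : Prop :=
  ∀ ζ ∈ Lm A n i, wd x ζ ∈ JJ a j • Lm A n (i + 1) → ∃ β ∈ Bd x i, ζ - β ∈ JJ a j • Lm A n i

lemma kosz_step (x : Fin n → A) (a : ℕ → A) (j i : ℕ)
    (hreg : ∀ z, a j * z ∈ JJ a j → z ∈ JJ a j)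
    (h1 : HV x a j (i + 1)) (h0 : HV x a j i) : HV x a (j + 1) i := by
  intro ζ hζ hw
  obtain ⟨η, hη, hη2⟩ := (mem_JJ_succ_smul _ _ _ _).1 hw
  have hz : wd x η ∈ JJ a j • Lm A n (i + 1 + 1) := by
    apply reg_smul_Lm _ _ _ hreg _ (wd_mem _ _ _ hη)
    have := map_smul_mem (wd x) (JJ a j) _ _ (fun z hz => wd_mem x (i + 1) z hz) _ hη2
    rw [map_sub, wd_wd, zero_sub, neg_mem_iff, map_smul] at this
    exact this
  obtain ⟨β, ⟨θ, hθ, rfl⟩, hβ⟩ := h1 η hη hz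
  obtain ⟨β, hβ0, hβ⟩ := h0 (ζ - a j • θ) (sub_mem hζ (Submodule.smul_mem _ _ hθ)) (by
    have := add_mem hη2 (Submodule.smul_mem _ (a j) hβ)
    convert this using 1
    rw [map_sub, map_smul, smul_sub]; abel)
  refine ⟨β, hβ0, (mem_JJ_succ_smul _ _ _ _).2 ⟨θ, hθ, ?_⟩⟩
  convert hβ using 1
  abel

lemma kosz_C (x : Fin n → A) (a : ℕ → A) (N : ℕ) (h0 : ∀ i < N, HV x a 0 i) (j : ℕ)
    (hreg : Reg a j) : ∀ i, i + j < N → HV x a j i := by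
  induction j with
  | zero => intro i hi; exact h0 i hi
  | succ j ih =>
    intro i hi
    have := ih (fun i hi => hreg i (by omega))
    exact kosz_step x a j i (hreg j (by omega)) (this _ (by omega)) (this _ (by omega))

lemma HV_zero_congr (x : Fin n → A) (a b : ℕ → A) (i : ℕ) (h : HV x a 0 i) : HV x b 0 i := by
  unfold HV at *
  rw [JJ_zero] at *
  exact h

lemma kosz_base (a : ℕ → A) (hreg : Reg a n) (m : ℕ) : ∀ j, j + m = n → ∀ i < m,
    HV (fun t : Fin n => a t) a j i := by
  induction m with
  | zero => intro j _ i hi; omega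
  | succ m ih =>
    intro j hj i hi ζ hζ hw
    have ih := ih (j + 1) (by omega)
    set x : Fin n → A := fun t : Fin n => a t
    let b : Fin n → A := Pi.single ⟨j, by omega⟩ 1
    have hb : ∑ t, b t * x t = a j := by
      simp [b, x, Pi.single_apply]
    have hct := ct_wd b x ζ
    rw [hb] at hct
    have hctm := map_smul_mem (ct b) (JJ a j) _ _ (fun z hz => ct_mem b i z hz) _ hw
    have hrj := hreg j (by omega)
    cases i with
    | zero =>
      rw [ct_zero b ζ hζ, map_zero, sub_zero] at hct
      refine ⟨0, zero_mem _, ?_⟩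
      rw [sub_zero]
      apply reg_smul_Lm _ _ _ hrj _ hζ
      rwa [← hct]
    | succ i =>
      have hmem := ct_mem b i ζ hζ
      obtain ⟨β, hβ0, hβ⟩ := ih i (by omega) (ct b ζ) hmem (by
        rw [mem_JJ_succ_smul]
        refine ⟨ζ, hζ, ?_⟩
        rw [← neg_mem_iff]
        convert hctm using 1
        rw [hct]; abel)
      obtain ⟨ξ, hξ, hξ2⟩ := (mem_JJ_succ_smul _ _ _ _).1 hβ
      refine ⟨wd x ξ, ⟨ξ, hξ, rfl⟩, ?_⟩
      apply reg_smul_Lm _ _ _ hrj _ (sub_mem hζ (wd_mem _ _ _ hξ))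
      have h3 := map_smul_mem (wd x) (JJ a j) _ _ (fun z hz => wd_mem x i z hz) _ hξ2
      rw [map_sub, map_sub, wd_Bd x i β hβ0, map_smul, sub_zero] at h3
      convert add_mem hctm h3 using 1
      rw [hct, smul_sub]; abel

lemma aMI_mem (J : Ideal A) (z : A) (hz : algebraMap A (Lam A n) z ∈ J • Lm A n 0) : z ∈ J := by
  have key : ∀ w ∈ J • Lm A n 0, (algebraMapInv (R := A) (M := Fin n → A)) w ∈ J := by
    intro w hw
    refine Submodule.smul_induction_on hw ?_ ?_
    · intro r hr m _
      rw [map_smul, smul_eq_mul]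
      exact Ideal.mul_mem_right _ _ hr
    · intro x y hx hy
      rw [map_add]
      exact add_mem hx hy
  have h2 := key _ hz
  have h3 : (algebraMapInv (R := A) (M := Fin n → A)) (algebraMap A (Lam A n) z) = z :=
    algebraMap_leftInverse _ z
  rwa [h3] at h2

lemma wd_algebraMap_mem (a ℓ : ℕ → A) (m : ℕ) (z : A) (hz : ∀ i < n, a i * z ∈ JJ ℓ m) :
    wd (fun t : Fin n => a t) (algebraMap A (Lam A n) z) ∈ JJ ℓ m • Lm A n (0 + 1) := by
  rw [wd_apply, ← Algebra.commutes, ← Algebra.smul_def, ← map_smul]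
  have : z • (fun t : Fin n => a t) = ∑ t : Fin n, (a t * z) • (Pi.single t 1 : Fin n → A) := by
    ext s
    simp [Finset.sum_apply, Pi.single_apply, mul_comm]
  rw [this, map_sum]
  refine Submodule.sum_mem _ fun t _ => ?_
  rw [map_smul]
  refine Submodule.smul_mem_smul (hz t t.2) ?_
  simp [Lm, exteriorPower]

/-- Rees: depth comparison. -/
lemma rees (a ℓ : ℕ → A) (m : ℕ) (ha : Reg a n) (hℓ : Reg ℓ m) (hmn : m < n) (z : A)
    (hz : ∀ i < n, a i * z ∈ JJ ℓ m) : z ∈ JJ ℓ m := by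
  have h := kosz_C (fun t : Fin n => a t) ℓ n
    (fun i hi => HV_zero_congr _ a ℓ i (kosz_base a ha n 0 (by omega) i hi)) m hℓ 0 (by omega)
  obtain ⟨β, hβ0, hβ⟩ := h (algebraMap A _ z) (by simp [Lm, exteriorPower]) (wd_algebraMap_mem a ℓ m z hz)
  simp only [Bd, Submodule.mem_bot] at hβ0
  rw [hβ0, sub_zero] at hβ
  exact aMI_mem _ _ hβ

end Koszul

section Wiebe
open ExteriorAlgebra
variable {A : Type*} [CommRing A] {n : ℕ}



/-- the sequence `ω_j`. -/
def om (b : ℕ → Fin n → A) : ℕ → Lam A n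
  | 0 => ιMulti A n (fun i => Pi.single i 1)
  | j + 1 => ct (b j) (om b j)

lemma top_det (v : Fin n → Fin n → A) :
    ιMulti A n v = (Matrix.of v).det • ιMulti A n (fun i => (Pi.single i 1 : Fin n → A)) := by
  have : (ιMulti A n : (Fin n → A) [⋀^Fin n]→ₗ[A] _) =
      (LinearMap.toSpanSingleton A _
        (ιMulti A n (fun i => (Pi.single i 1 : Fin n → A)))).compAlternatingMap
        (Matrix.detRowAlternating) := by
    refine Module.Basis.ext_alternating (Pi.basisFun A (Fin n)) fun i h => ?_
    let σ : Equiv.Perm (Fin n) := Equiv.ofBijective i (Finite.injective_iff_bijective.1 h)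
    let e : Fin n → Fin n → A := fun i => Pi.single i 1
    have h1 : (fun t => Pi.basisFun A (Fin n) (i t)) = e ∘ σ := by
      ext t; simp [e, σ]
    rw [h1, AlternatingMap.map_perm, AlternatingMap.map_perm]
    have : Matrix.detRowAlternating e = (1 : A) := by
      have : Matrix.of e = 1 := by
        ext i j; simp [e, Matrix.one_apply, Pi.single_apply, eq_comm]
      change (Matrix.of e).det = 1
      rw [this, Matrix.det_one]
    simp [this, e]
  have h2 := DFunLike.congr_fun this v
  exact h2

/-- action of the exterior algebra by contraction -/
def Psi : ExteriorAlgebra A (Fin n → A) →ₐ[A] Module.End A (Lam A n) :=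
  ExteriorAlgebra.lift A ⟨CliffordAlgebra.contractLeft
    (Q := (0 : QuadraticForm A (Fin n → A))) ∘ₗ dl, fun m => by
      exact LinearMap.ext fun z => ct_ct m z⟩

lemma Psi_ι (b : Fin n → A) : Psi (ι A b) = ct b := by
  simp [Psi, ct]

lemma Psi_om (b : ℕ → Fin n → A) (j : ℕ) :
    Psi (ιMulti A j (fun i : Fin j => b (j - 1 - i))) (om b 0) = om b j := by
  induction j with
  | zero => simp
  | succ j ih =>
    rw [ιMulti_succ_apply, map_mul, Psi_ι, Module.End.mul_apply]
    change _ = ct (b j) (om b j)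
    rw [← ih]
    congr 4
    ext i
    simp [Matrix.vecTail, Nat.sub_sub, add_comm]

lemma om_top (b : ℕ → Fin n → A) :
    ∃ c : A, om b n = c • (Matrix.of (fun i : Fin n => b i)).det • (Psi (om b 0) (om b 0)) := by
  rw [← Psi_om, top_det]
  have : (Matrix.of fun i : Fin n => b (n - 1 - i)) =
      (Matrix.of (fun i : Fin n => b i)).submatrix Fin.revPerm id := by
    ext i j
    have : n - 1 - (i : ℕ) = n - (i + 1) := by omega
    simp [Fin.val_rev, this]
  rw [this, Matrix.det_permute]
  refine ⟨((Equiv.Perm.sign (Fin.revPerm (n := n)) : ℤ) : A), ?_⟩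
  rw [map_smul, LinearMap.smul_apply, smul_smul]
  rfl

lemma om_mem (b : ℕ → Fin n → A) (j : ℕ) : ∀ i, i + j = n → om b j ∈ Lm A n i := by
  induction j with
  | zero =>
    intro i hi
    obtain rfl : i = n := by omega
    exact ιMulti_range A i ⟨_, rfl⟩
  | succ j ih =>
    intro i hi
    exact ct_mem _ _ _ (ih (i + 1) (by omega))


lemma wd_om_zero (b : ℕ → Fin n → A) (x : Fin n → A) : wd x (om b 0) = 0 := by
  have hx : x = ∑ i, x i • (Pi.single i 1 : Fin n → A) := by
    ext s
    simp [Finset.sum_apply, Pi.single_apply]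
  rw [wd_apply, hx, map_sum, Finset.sum_mul]
  refine Finset.sum_eq_zero fun i _ => ?_
  rw [map_smul, smul_mul_assoc]
  have : ι A (Pi.single i 1 : Fin n → A) * om b 0 =
      ιMulti A (n + 1) (Matrix.vecCons (Pi.single i 1) fun i => Pi.single i 1) := by
    rw [ιMulti_succ_apply]; rfl
  rw [this, AlternatingMap.map_eq_zero_of_not_injective, smul_zero]
  intro h
  have := @h 0 i.succ (by simp)
  exact absurd this (Fin.succ_ne_zero i).symm

lemma top_span (b : ℕ → Fin n → A) (z : Lam A n) (hz : z ∈ Lm A n n) : ∃ h : A, z = h • om b 0 := by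
  rw [Lm, ← ιMulti_span_fixedDegree] at hz
  induction hz using Submodule.span_induction with
  | mem x hx =>
    obtain ⟨v, rfl⟩ := hx
    exact ⟨_, top_det v⟩
  | zero => exact ⟨0, by simp⟩
  | add x y _ _ hx hy =>
    obtain ⟨h, rfl⟩ := hx
    obtain ⟨h', rfl⟩ := hy
    exact ⟨h + h', by rw [add_smul]⟩
  | smul a x _ hx =>
    obtain ⟨h, rfl⟩ := hx
    exact ⟨a * h, by rw [mul_smul]⟩

lemma JJ_mono (a : ℕ → A) (j : ℕ) : JJ a j ≤ JJ a (j + 1) := by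
  rw [JJ_succ]; exact le_sup_left

lemma wd_om_succ (b : ℕ → Fin n → A) (x : Fin n → A) (j : ℕ) :
    wd x (om b (j + 1)) = (∑ i, b j i * x i) • om b j - ct (b j) (wd x (om b j)) := by
  change wd x (ct (b j) (om b j)) = _
  rw [ct_wd]; abel

lemma wd_om (b : ℕ → Fin n → A) (x : Fin n → A) (ℓ : ℕ → A)
    (hb : ∀ j < n, ∑ i, b j i * x i = ℓ j) (j : ℕ) : ∀ i, i + j = n →
      wd x (om b j) ∈ JJ ℓ j • Lm A n (i + 1) := by
  induction j with
  | zero =>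
    intro i hi
    rw [wd_om_zero]; exact zero_mem _
  | succ j ih =>
    intro i hi
    rw [wd_om_succ, hb j (by omega)]
    rw [mem_JJ_succ_smul]
    refine ⟨om b j, om_mem b j (i + 1) (by omega), ?_⟩
    have := map_smul_mem (ct (b j)) (JJ ℓ j) _ _ (fun z hz => ct_mem (b j) (i + 1) z hz) _
      (ih (i + 1) (by omega))
    rw [← neg_mem_iff]
    convert this using 1
    abel

lemma wiebe_step (b : ℕ → Fin n → A) (a ℓ : ℕ → A) (ha : Reg a n) (hℓ : Reg ℓ n)
    (hb : ∀ j < n, ∑ i : Fin n, b j i * a i = ℓ j) (j : ℕ) : ∀ i, i + j = n →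
    ∀ ζ ∈ Lm A n i, wd (fun t : Fin n => a t) ζ ∈ JJ ℓ j • Lm A n (i + 1) →
      ∃ h : A, ∃ β ∈ Bd (fun t : Fin n => a t) i, ζ - h • om b j - β ∈ JJ ℓ j • Lm A n i := by
  set x : Fin n → A := fun t : Fin n => a t with hx
  induction j with
  | zero =>
    intro i hi ζ hζ _
    obtain rfl : i = n := by omega
    obtain ⟨h, rfl⟩ := top_span b ζ hζ
    exact ⟨h, 0, zero_mem _, by simp⟩
  | succ j ih =>
    intro i hi ζ hζ hw
    have hregj := hℓ j (by omega)
    obtain ⟨η, hη, hη2⟩ := (mem_JJ_succ_smul _ _ _ _).1 hw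
    have hz : wd x η ∈ JJ ℓ j • Lm A n (i + 1 + 1) := by
      apply reg_smul_Lm _ _ _ hregj _ (wd_mem _ _ _ hη)
      have := map_smul_mem (wd x) (JJ ℓ j) _ _ (fun z hz => wd_mem x (i + 1) z hz) _ hη2
      rw [map_sub, wd_wd, zero_sub, neg_mem_iff, map_smul] at this
      exact this
    obtain ⟨h, β, ⟨θ, hθ, rfl⟩, hβ⟩ := ih (i + 1) (by omega) η hη hz
    have hHV := kosz_C x ℓ n
      (fun i hi => HV_zero_congr _ a ℓ i (kosz_base a ha n 0 (by omega) i hi)) j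
      (fun i hi => hℓ i (by omega)) i (by omega)
    have hom := om_mem b (j + 1) i (by omega)
    obtain ⟨β, hβ0, hβ2⟩ := hHV (ζ - h • om b (j + 1) - ℓ j • θ)
      (sub_mem (sub_mem hζ (Submodule.smul_mem _ _ hom)) (Submodule.smul_mem _ _ hθ)) (by
        have h4 := map_smul_mem (ct (b j)) (JJ ℓ j) _ _ (fun z hz => ct_mem (b j) (i + 1) z hz) _
          (wd_om b x ℓ hb j (i + 1) (by omega))
        have := add_mem (add_mem hη2 (Submodule.smul_mem _ (ℓ j) hβ)) (Submodule.smul_mem _ h h4)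
        convert this using 1
        rw [map_sub, map_sub, map_smul, map_smul, wd_om_succ, hb j (by omega)]
        simp only [smul_sub, smul_comm h (ℓ j)]
        abel)
    refine ⟨h, β, hβ0, (mem_JJ_succ_smul _ _ _ _).2 ⟨θ, hθ, ?_⟩⟩
    convert hβ2 using 1
    abel

/-- Wiebe's theorem. -/
lemma wiebe (b : ℕ → Fin n → A) (a ℓ : ℕ → A) (ha : Reg a n) (hℓ : Reg ℓ n)
    (hb : ∀ j < n, ∑ i : Fin n, b j i * a i = ℓ j) (g : A) (hg : ∀ i < n, a i * g ∈ JJ ℓ n) :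
    ∃ c : A, g - c * (Matrix.of (fun i : Fin n => b i)).det ∈ JJ ℓ n := by
  obtain ⟨h, β, hβ0, hβ⟩ := wiebe_step b a ℓ ha hℓ hb n 0 (by omega) (algebraMap A _ g)
    (by simp [Lm, exteriorPower]) (wd_algebraMap_mem a ℓ n g hg)
  simp only [Bd, Submodule.mem_bot] at hβ0
  rw [hβ0, sub_zero] at hβ
  obtain ⟨c, hc⟩ := om_top b
  have hP : Psi (om b 0) (om b 0) ∈ Lm A n 0 := by
    let b2 : ℕ → Fin n → A := fun j t => if (t : ℕ) = n - 1 - j then 1 else 0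
    have h1 := Psi_om b2 n
    have h2 : (fun i : Fin n => b2 (n - 1 - i)) = fun i => Pi.single i 1 := by
      funext i t
      have : n - 1 - (n - 1 - (i : ℕ)) = i := by omega
      simp [b2, this, Pi.single_apply, Fin.ext_iff]
    rw [h2] at h1
    have h3 : Psi (om b 0) (om b 0) = om b2 n := h1
    rw [h3]
    exact om_mem b2 n 0 (by omega)
  obtain ⟨u, hu⟩ := Lm_zero_mem _ hP
  rw [hc, hu] at hβ
  refine ⟨h * c * u, ?_⟩
  apply aMI_mem (n := n)
  convert hβ using 1
  rw [map_sub]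
  congr 1
  simp only [map_mul, Algebra.smul_def]
  simp only [mul_assoc]
  congr 2
  exact Algebra.commutes _ _

end Wiebe

section Depth
open Polynomial in
lemma fibre_ht {D : Type*} [CommRing D] [IsDomain D] (Q : Ideal D[X]) [Q.IsPrime]
    (hQ : Q.comap (C : D →+* D[X]) = ⊥) : Q.height ≤ 1 := by
  let K := FractionRing D
  let _ : Algebra D[X] K[X] := Polynomial.algebra D K
  have : IsLocalization ((nonZeroDivisors D).map (C : D →+* D[X])) K[X] :=
    Polynomial.isLocalization (nonZeroDivisors D) K
  have disj : Disjoint (((nonZeroDivisors D).map (C : D →+* D[X]) : Submonoid D[X]) : Set D[X]) Q := by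
    refine Set.disjoint_left.mpr fun a ⟨b, hb⟩ ha ↦ ?_
    have : b ∈ Q.comap (C : D →+* D[X]) := by
      rw [Ideal.mem_comap, hb.2]; exact ha
    rw [hQ, Ideal.mem_bot] at this
    exact nonZeroDivisors.ne_zero hb.1 this
  rw [← IsLocalization.height_map_of_disjoint ((nonZeroDivisors D).map (C : D →+* D[X]))
    (S := K[X]) Q disj]
  have hp := IsLocalization.isPrime_of_isPrime_disjoint
    ((nonZeroDivisors D).map (C : D →+* D[X])) K[X] Q ‹_› disj
  have h1 := Ideal.height_le_ringKrullDim_of_ne_top hp.ne_top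
  have h2 : ringKrullDim K[X] ≤ 1 := by
    rw [Polynomial.ringKrullDim_of_isNoetherianRing, ringKrullDim_eq_zero_of_field]
    simp
  exact_mod_cast h1.trans h2

open Polynomial in
lemma poly_ht {R : Type*} [CommRing R] [IsNoetherianRing R] (P : Ideal R[X]) [P.IsPrime] :
    P.height ≤ (P.comap (C : R →+* R[X])).height + 1 := by
  set p := P.comap (C : R →+* R[X]) with hp
  have : P.LiesOver p := ⟨rfl⟩
  refine (Ideal.height_le_height_add_of_liesOver p P).trans ?_
  gcongr
  let e : (R[X] ⧸ (p.map (algebraMap R R[X]))) ≃+* (R ⧸ p)[X] :=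
    (Ideal.polynomialQuotientEquivQuotientPolynomial p).symm
  rw [← e.height_map]
  have hle : p.map (algebraMap R R[X]) ≤ P := Ideal.map_comap_le
  have h1 : (P.map (Ideal.Quotient.mk (p.map (algebraMap R R[X])))).IsPrime :=
    Ideal.isPrime_map_quotientMk_of_isPrime hle
  have h2 : ((P.map (Ideal.Quotient.mk (p.map (algebraMap R R[X])))).map e).IsPrime :=
    Ideal.map_isPrime_of_equiv e
  apply fibre_ht
  rw [eq_bot_iff]
  intro x hx
  obtain ⟨r, rfl⟩ := Ideal.Quotient.mk_surjective x
  rw [Ideal.mem_comap] at hx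
  have h3 : (C (Ideal.Quotient.mk p r) : (R ⧸ p)[X]) =
      e (Ideal.Quotient.mk _ (C r)) := by
    simp [e]
  rw [h3] at hx
  have h4 := (Ideal.mem_map_of_equiv e _).1 hx
  obtain ⟨y, hy, hye⟩ := h4
  rw [e.injective hye] at hy
  have h5 : Polynomial.C r ∈ P := by
    have : Polynomial.C r ∈ (P.map (Ideal.Quotient.mk (p.map (algebraMap R R[X])))).comap
      (Ideal.Quotient.mk (p.map (algebraMap R R[X]))) := hy
    rwa [Ideal.comap_map_quotientMk, sup_eq_right.2 hle] at this
  rw [Ideal.mem_bot, Ideal.Quotient.eq_zero_iff_mem]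
  exact h5

open Polynomial in
lemma poly_ht2 {R : Type*} [CommRing R] [IsNoetherianRing R] (P : Ideal R[X]) [P.IsPrime]
    (h : ∀ f ∈ P, ∀ i, f.coeff i ∈ P.comap (C : R →+* R[X])) :
    P.height ≤ (P.comap (C : R →+* R[X])).height := by
  set p := P.comap (C : R →+* R[X]) with hp
  have : P.LiesOver p := ⟨rfl⟩
  refine (Ideal.height_le_height_add_of_liesOver p P).trans ?_
  have hle : p.map (algebraMap R R[X]) = P := by
    refine le_antisymm Ideal.map_comap_le fun f hf => ?_
    exact Ideal.mem_map_C_iff.2 (h f hf)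
  rw [hle, Ideal.map_quotient_self, Ideal.height_bot, add_zero]

end Depth

section Depth

/-- `a_0,…,a_{n-1}` lie in `P` and are a regular sequence after localizing at `P`. -/
def PReg {C : Type*} [CommRing C] (P : Ideal C) (a : ℕ → C) (n : ℕ) : Prop :=
  (∀ i < n, a i ∈ P) ∧ ∀ j < n, ∀ z, a j * z ∈ JJ a j → ∃ s ∉ P, s * z ∈ JJ a j

/-- depth of the localization at `P` is at least `n` -/
def Dp {C : Type*} [CommRing C] (P : Ideal C) (n : ℕ) : Prop := ∃ a, PReg P a n

variable {C C' : Type*} [CommRing C] [CommRing C']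

lemma Dp_mono (P : Ideal C) {m n : ℕ} (h : m ≤ n) (hn : Dp P n) : Dp P m := by
  obtain ⟨a, h1, h2⟩ := hn
  exact ⟨a, fun i hi => h1 i (by omega), fun i hi => h2 i (by omega)⟩

lemma JJ_map (f : C →+* C') (a : ℕ → C) (j : ℕ) :
    JJ (fun i => f (a i)) j = (JJ a j).map f := by
  rw [JJ, JJ, Ideal.map_span, Set.image_image]

lemma JJ_congr (a b : ℕ → C) (j : ℕ) (h : ∀ i < j, a i = b i) : JJ a j = JJ b j := by
  unfold JJ
  congr 1
  exact Set.image_congr fun i hi => h i hi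

lemma Dp_equiv (e : C ≃+* C') (P : Ideal C') (n : ℕ)
    (h : Dp (P.comap (e : C →+* C')) n) : Dp P n := by
  obtain ⟨a, h1, h2⟩ := h
  refine ⟨fun i => (e : C →+* C') (a i), h1, fun j hj z hz => ?_⟩
  rw [JJ_map] at hz ⊢
  obtain ⟨z, rfl⟩ := e.surjective z
  have key : ∀ w, e w ∈ (JJ a j).map (e : C →+* C') ↔ w ∈ JJ a j := by
    intro w
    exact Ideal.apply_mem_of_equiv_iff (f := e)
  obtain ⟨s, hs, hsz⟩ := h2 j hj z ((key _).1 (by rw [map_mul]; exact hz))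
  exact ⟨e s, hs, by rw [← map_mul, key]; exact hsz⟩

lemma sat_free {M : Type*} [AddCommGroup M] [Module C M] [Module.Free C M]
    (J P : Ideal C) [P.IsPrime] (r : C) (h : ∀ z, r * z ∈ J → ∃ s ∉ P, s * z ∈ J) (m : M)
    (hm : r • m ∈ J • (⊤ : Submodule C M)) : ∃ s ∉ P, s • m ∈ J • (⊤ : Submodule C M) := by
  classical
  let b := Module.Free.chooseBasis C M
  have key : ∀ y ∈ J • (⊤ : Submodule C M), ∀ i, b.repr y i ∈ J := by
    intro y hy i
    refine Submodule.smul_induction_on hy ?_ ?_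
    · intro r hr n _
      simp [Ideal.mul_mem_right _ _ hr]
    · intro x y hx hy
      simp [Ideal.add_mem _ hx hy]
  have h2 : ∀ i, ∃ s ∉ P, s * b.repr m i ∈ J := fun i => h _ (by simpa using key _ hm i)
  choose s hs hsm using h2
  refine ⟨∏ i ∈ (b.repr m).support, s i, ?_, ?_⟩
  · exact fun hh => by
      obtain ⟨i, -, hi⟩ := (Ideal.IsPrime.prod_mem_iff).1 hh
      exact hs i hi
  · generalize hp : (∏ i ∈ (b.repr m).support, s i) = p
    rw [← b.linearCombination_repr m, Finsupp.linearCombination_apply, Finsupp.sum,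
      Finset.smul_sum]
    refine Submodule.sum_mem _ fun i hi => ?_
    rw [smul_smul]
    refine Submodule.smul_mem_smul ?_ trivial
    rw [← hp, ← Finset.mul_prod_erase _ _ hi]
    convert Ideal.mul_mem_left _ (∏ x ∈ (b.repr m).support.erase i, s x) (hsm i) using 1
    ring

lemma Dp_free [Algebra C C'] [Module.Free C C'] (P : Ideal C') [P.IsPrime] (n : ℕ)
    (h : Dp (P.comap (algebraMap C C')) n) : Dp P n := by
  obtain ⟨a, h1, h2⟩ := h
  refine ⟨fun i => algebraMap C C' (a i), h1, fun j hj z hz => ?_⟩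
  rw [JJ_map] at hz ⊢
  have key : ∀ w, w ∈ (JJ a j).map (algebraMap C C') ↔ w ∈ JJ a j • (⊤ : Submodule C C') := by
    intro w
    rw [Ideal.smul_top_eq_map, Submodule.restrictScalars_mem]
  rw [key, ← Algebra.smul_def] at hz
  obtain ⟨s, hs, hsz⟩ := sat_free _ _ _ (h2 j hj) z hz
  exact ⟨algebraMap C C' s, hs, by rw [key, ← Algebra.smul_def]; exact hsz⟩

open Polynomial in
lemma Dp_step (P : Ideal C[X]) [P.IsPrime] (n : ℕ)
    (h : Dp (P.comap (Polynomial.C : C →+* C[X])) n) (f : C[X]) (hf : f ∈ P) (i : ℕ)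
    (hi : f.coeff i ∉ P.comap (Polynomial.C : C →+* C[X])) : Dp P (n + 1) := by
  set p := P.comap (Polynomial.C : C →+* C[X]) with hp
  obtain ⟨a, h1, h2⟩ := h
  let a' : ℕ → C[X] := fun i => if i < n then Polynomial.C (a i) else f
  have hJ : ∀ j ≤ n, JJ a' j = (JJ a j).map (Polynomial.C : C →+* C[X]) := by
    intro j hj
    rw [← JJ_map]
    exact JJ_congr _ _ _ fun i hi => by simp [a', show i < n by omega]
  refine ⟨a', ?_, ?_⟩
  · intro i hi
    by_cases h : i < n
    · have := h1 i h
      simp only [a', h, if_true]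
      exact this
    · simpa [a', h] using hf
  · intro j hj z hz
    rw [hJ j (by omega)] at hz ⊢
    have key : ∀ w, w ∈ (JJ a j).map (Polynomial.C : C →+* C[X]) ↔
        w ∈ JJ a j • (⊤ : Submodule C C[X]) := by
      intro w
      rw [Ideal.smul_top_eq_map, Submodule.restrictScalars_mem]
      rfl
    by_cases h : j < n
    · simp only [a', h, if_true] at hz
      rw [key, ← Polynomial.smul_eq_C_mul] at hz
      obtain ⟨s, hs, hsz⟩ := sat_free _ _ _ (h2 j h) z hz
      exact ⟨Polynomial.C s, hs, by rw [key, ← Polynomial.smul_eq_C_mul]; exact hsz⟩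
    · obtain rfl : j = n := by omega
      simp only [a', lt_irrefl, if_false] at hz
      let S := Localization.AtPrime p
      let J' : Ideal C := ((JJ a j).map (algebraMap C S)).comap (algebraMap C S)
      have hJ' : ∀ z, z ∈ J' ↔ ∃ s ∉ p, s * z ∈ JJ a j := by
        intro z
        simp only [J', Ideal.mem_comap]
        rw [IsLocalization.algebraMap_mem_map_algebraMap_iff p.primeCompl]
        exact Iff.rfl
      have hle : JJ a j ≤ J' := Ideal.le_comap_map
      let q := Polynomial.mapRingHom (Ideal.Quotient.mk J')
      have hqf : q f ∈ nonZeroDivisors (C ⧸ J')[X] := by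
        by_contra hcon
        rw [Polynomial.notMem_nonZeroDivisors_iff] at hcon
        obtain ⟨u, hu0, hu⟩ := hcon
        obtain ⟨u, rfl⟩ := Ideal.Quotient.mk_surjective u
        apply hu0
        rw [Ideal.Quotient.eq_zero_iff_mem]
        have h3 : (Ideal.Quotient.mk J' (u * f.coeff i)) = 0 := by
          have := congrArg (fun g => Polynomial.coeff g i) hu
          simpa [q] using this
        rw [Ideal.Quotient.eq_zero_iff_mem, hJ'] at h3
        obtain ⟨s, hs, hsm⟩ := h3
        rw [hJ']
        have hpp : p.IsPrime := inferInstance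
        refine ⟨s * f.coeff i, fun hh => (hpp.mem_or_mem hh).elim hs hi, ?_⟩
        convert hsm using 1; ring
      have hqz : q z = 0 := by
        have : q f * q z = 0 := by
          rw [← map_mul]
          ext m
          rw [Polynomial.coe_mapRingHom, Polynomial.coeff_map, Polynomial.coeff_zero,
            Ideal.Quotient.eq_zero_iff_mem]
          exact hle (Ideal.mem_map_C_iff.1 hz m)
        exact (mul_right_mem_nonZeroDivisors_eq_zero_iff hqf).1 (by rw [mul_comm]; exact this)
      have hc : ∀ m, ∃ s ∉ p, s * z.coeff m ∈ JJ a j := by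
        intro m
        rw [← hJ', ← Ideal.Quotient.eq_zero_iff_mem]
        have := congrArg (fun g => Polynomial.coeff g m) hqz
        simpa [q] using this
      choose s hs hsm using hc
      refine ⟨Polynomial.C (∏ m ∈ z.support, s m), ?_, ?_⟩
      · intro hh
        obtain ⟨i, -, hi⟩ := (Ideal.IsPrime.prod_mem_iff (p := p)).1 hh
        exact hs i hi
      · rw [Ideal.mem_map_C_iff]
        intro m
        rw [Polynomial.coeff_C_mul]
        by_cases hm : m ∈ z.support
        · rw [← Finset.mul_prod_erase _ _ hm]
          convert Ideal.mul_mem_left _ (∏ x ∈ z.support.erase m, s x) (hsm m) using 1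
          ring
        · rw [Polynomial.notMem_support_iff.1 hm, mul_zero]; exact zero_mem _

end Depth

section Depth

lemma Dp_zero {C : Type*} [CommRing C] (P : Ideal C) : Dp P 0 :=
  ⟨fun _ => 0, fun i hi => absurd hi (by omega), fun i hi => absurd hi (by omega)⟩

lemma ht_comap {C C' : Type*} [CommRing C] [CommRing C'] (e : C ≃+* C') (P : Ideal C') :
    (P.comap (e : C →+* C')).height = P.height :=
  RingEquiv.height_comap e P

lemma Dp_field (k : Type) [Field k] (n : ℕ) : ∀ (P : Ideal (MvPolynomial (Fin n) k)) [P.IsPrime]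
    (m : ℕ), (m : ℕ∞) ≤ P.height → Dp P m := by
  induction n with
  | zero =>
    intro P hP m hm
    have h1 := Ideal.height_le_ringKrullDim_of_ne_top hP.ne_top
    rw [MvPolynomial.ringKrullDim_of_isNoetherianRing, ringKrullDim_eq_zero_of_field] at h1
    have h2 : P.height ≤ 0 := by
      have : (P.height : WithBot ℕ∞) ≤ ((0 : ℕ∞) : WithBot ℕ∞) := by simpa using h1
      exact WithBot.coe_le_coe.1 this
    have h3 : (m : ℕ∞) ≤ 0 := hm.trans h2
    have h4 : m = 0 := by simpa using h3
    subst h4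
    exact Dp_zero P
  | succ n ih =>
    intro P hP m hm
    let e := (MvPolynomial.finSuccEquiv k n).toRingEquiv.symm
    apply Dp_equiv e
    rw [← ht_comap e] at hm
    set Q := P.comap (e : Polynomial (MvPolynomial (Fin n) k) →+* _) with hQ
    have hQP : Q.IsPrime := inferInstance
    by_cases hc : ∀ f ∈ Q, ∀ i, f.coeff i ∈ Q.comap (Polynomial.C)
    · have h1 := poly_ht2 Q hc
      exact Dp_free Q m (ih _ m (hm.trans h1))
    · push Not at hc
      obtain ⟨f, hf, i, hi⟩ := hc
      cases m with
      | zero => exact Dp_zero _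
      | succ m =>
        have h1 := poly_ht Q
        refine Dp_step Q m (ih _ m ?_) f hf i hi
        have h2 := hm.trans h1
        push_cast at h2
        exact (ENat.add_le_add_iff_right (by simp)).1 h2

open MvPolynomial in
lemma Dp_elim0 {C' : Type*} [CommRing C'] (c r : ℕ) : ∀ (P : Ideal (MvPolynomial (Fin r) C'))
    [P.IsPrime], Dp (P.comap (MvPolynomial.C : C' →+* _)) c →
    (∀ a : Fin r, ∃ Δ ∉ P.comap (MvPolynomial.C : C' →+* _), ∃ u : C', C Δ * X a + C u ∈ P) →
    Dp P (c + r) := by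
  induction r with
  | zero =>
    intro P hP h _
    exact Dp_free P c h
  | succ r ih =>
    intro P hP h hX
    let e := (MvPolynomial.finSuccEquiv C' r).toRingEquiv.symm
    apply Dp_equiv e
    set Q := P.comap (e : Polynomial (MvPolynomial (Fin r) C') →+* _) with hQ
    have hQP : Q.IsPrime := inferInstance
    have hmem : ∀ w, finSuccEquiv C' r w ∈ Q ↔ w ∈ P := by
      intro w
      rw [hQ, Ideal.mem_comap]
      have : (e : Polynomial (MvPolynomial (Fin r) C') →+* _) (finSuccEquiv C' r w) = w :=
        (MvPolynomial.finSuccEquiv C' r).symm_apply_apply w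
      rw [this]
    have hC : ∀ u : C', Polynomial.C (MvPolynomial.C u) ∈ Q ↔ MvPolynomial.C u ∈ P := by
      intro u
      rw [← hmem, finSuccEquiv_apply]
      simp
    have hcc : (Q.comap Polynomial.C).comap (MvPolynomial.C : C' →+* _) =
        P.comap (MvPolynomial.C : C' →+* _) := by
      ext u
      exact hC u
    have h0 : Dp (Q.comap Polynomial.C) (c + r) := by
      refine ih (Q.comap Polynomial.C) (by rw [hcc]; exact h) fun a => ?_
      obtain ⟨Δ, hΔ, u, hu⟩ := hX a.succ
      refine ⟨Δ, by rw [hcc]; exact hΔ, u, ?_⟩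
      rw [← hmem] at hu
      simpa [finSuccEquiv_apply] using hu
    obtain ⟨Δ, hΔ, u, hu⟩ := hX 0
    refine Dp_step Q (c + r) h0 (finSuccEquiv C' r (C Δ * X 0 + C u)) ((hmem _).2 hu) 1 ?_
    have : (finSuccEquiv C' r (C Δ * X 0 + C u)).coeff 1 = C Δ := by
      simp [finSuccEquiv_apply, Polynomial.coeff_C]
    rw [this]
    intro hh
    exact hΔ ((hC Δ).1 hh)

open MvPolynomial in
lemma Dp_elim {R ι : Type*} [CommRing R] (c r : ℕ) (P : Ideal (MvPolynomial ι R)) [P.IsPrime]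
    [Fintype ι] (h : Dp (P.comap (MvPolynomial.C : R →+* _)) c) (f : Fin r → ι)
    (hf : Function.Injective f)
    (hX : ∀ a, ∃ Δ ∉ P.comap (MvPolynomial.C : R →+* _), ∃ u : ι → R, (∀ b, u (f b) = 0) ∧
      C Δ * X (f a) + ∑ i, C (u i) * X i ∈ P) : Dp P (c + r) := by
  classical
  let G := ((Set.range f)ᶜ : Set ι)
  let σ : ι ≃ Fin r ⊕ G := (Equiv.Set.sumCompl (Set.range f)).symm.trans
    (Equiv.sumCongr (Equiv.ofInjective f hf).symm (Equiv.refl _))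
  have hσ1 : ∀ a, σ (f a) = Sum.inl a := by
    intro a
    have : f a = σ.symm (Sum.inl a) := by simp [σ]
    rw [this, Equiv.apply_symm_apply]
  have hσ2 : ∀ g : G, σ g = Sum.inr g := by
    intro g
    have : (g : ι) = σ.symm (Sum.inr g) := by simp [σ]; rfl
    rw [this, Equiv.apply_symm_apply]
  let E : MvPolynomial ι R ≃ₐ[R] MvPolynomial (Fin r) (MvPolynomial G R) :=
    (renameEquiv R σ).trans (sumAlgEquiv R (Fin r) G)
  let e := E.toRingEquiv.symm
  apply Dp_equiv e
  set Q := P.comap (e : MvPolynomial (Fin r) (MvPolynomial G R) →+* _) with hQ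
  have hQP : Q.IsPrime := inferInstance
  have hmem : ∀ w, E w ∈ Q ↔ w ∈ P := by
    intro w
    rw [hQ, Ideal.mem_comap]
    have : (e : MvPolynomial (Fin r) (MvPolynomial G R) →+* _) (E w) = w :=
      E.symm_apply_apply w
    rw [this]
  have hEC : ∀ u : R, E (C u) = C (C u) := by
    intro u
    simp [E]
  have hEX : ∀ a, E (X (f a)) = X a := by
    intro a
    simp [E, hσ1]
  have hEG : ∀ g : G, E (X g) = C (X g) := by
    intro g
    simp [E, hσ2]
  have hcc : (Q.comap MvPolynomial.C).comap (MvPolynomial.C : R →+* _) =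
      P.comap (MvPolynomial.C : R →+* _) := by
    ext u
    simp only [Ideal.mem_comap]
    rw [← hEC, hmem]
  apply Dp_elim0
  · have h5 : Dp ((Q.comap MvPolynomial.C).comap (MvPolynomial.C : R →+* _)) c := by
      rw [hcc]; exact h
    exact Dp_free _ c h5
  · intro a
    obtain ⟨Δ, hΔ, u, hu0, hu⟩ := hX a
    refine ⟨C Δ, ?_, ∑ g : G, C (u g) * X g, ?_⟩
    · rw [← hcc] at hΔ
      exact hΔ
    · rw [← hmem] at hu
      convert hu using 1
      rw [map_add, map_mul, hEC, hEX, map_sum, map_sum]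
      congr 1
      rw [← σ.symm.sum_comp, Fintype.sum_sum_type]
      have h6 : ∀ a, σ.symm (Sum.inl a) = f a := fun a => by rw [Equiv.symm_apply_eq, hσ1]
      have h7 : ∀ g : G, σ.symm (Sum.inr g) = g := fun a => by rw [Equiv.symm_apply_eq, hσ2]
      simp only [h6, h7, hu0, map_zero, zero_mul, Finset.sum_const_zero, zero_add, map_mul, hEC,
        hEG]

end Depth

section Depth
variable {C : Type*} [CommRing C]

lemma alg_mem_iff (P : Ideal C) [P.IsPrime] (J : Ideal C) (z : C) :
    algebraMap C (Localization.AtPrime P) z ∈ J.map (algebraMap C (Localization.AtPrime P)) ↔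
      ∃ s ∉ P, s * z ∈ J := by
  rw [IsLocalization.algebraMap_mem_map_algebraMap_iff P.primeCompl]
  exact Iff.rfl

lemma PReg_loc (P : Ideal C) [P.IsPrime] (a : ℕ → C) (n : ℕ)
    (h : ∀ j < n, ∀ z, a j * z ∈ JJ a j → ∃ s ∉ P, s * z ∈ JJ a j) :
    Reg (fun i => algebraMap C (Localization.AtPrime P) (a i)) n := by
  intro j hj z hz
  rw [JJ_map] at hz ⊢
  obtain ⟨⟨z0, s⟩, hs⟩ := IsLocalization.surj P.primeCompl z
  have hu : IsUnit (algebraMap C (Localization.AtPrime P) s) := IsLocalization.map_units _ s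
  rw [← Ideal.mul_unit_mem_iff_mem _ hu, hs, alg_mem_iff]
  rw [← Ideal.mul_unit_mem_iff_mem _ hu, mul_assoc, hs, ← map_mul, alg_mem_iff] at hz
  obtain ⟨t, ht, htz⟩ := hz
  obtain ⟨u, hu2, huz⟩ := h j hj (t * z0) (by convert htz using 1; ring)
  refine ⟨u * t, fun hh => ((inferInstance : P.IsPrime).mem_or_mem hh).elim hu2 ht, ?_⟩
  convert huz using 1; ring

lemma reg_of_Dp [IsNoetherianRing C] (ℓ : ℕ → C) (m : ℕ)
    (h : ∀ i < m, ∀ (P : Ideal C) [P.IsPrime], (∀ t ≤ i, ℓ t ∈ P) → Dp P (i + 1)) : Reg ℓ m := by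
  induction m with
  | zero => intro j hj; omega
  | succ m ih =>
    have ih := ih (fun i hi => h i (by omega))
    intro j hj z hz
    by_cases hjm : j < m
    · exact ih j hjm z hz
    obtain rfl : j = m := by omega
    by_contra hcon
    have hz0 : (Ideal.Quotient.mk (JJ ℓ j) z) ≠ 0 := by
      rwa [Ne, Ideal.Quotient.eq_zero_iff_mem]
    obtain ⟨P, hP, hle⟩ := exists_le_isAssociatedPrime_of_isNoetherianRing C _ hz0
    rw [isAssociatedPrime_iff] at hP
    obtain ⟨hPp, w, hw⟩ := hP
    obtain ⟨w, rfl⟩ := Ideal.Quotient.mk_surjective w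
    have hPm : ∀ s, s ∈ P ↔ s * w ∈ JJ ℓ j := by
      intro s
      rw [hw, Submodule.mem_colon_singleton, Submodule.mem_bot, ← Ideal.Quotient.eq_zero_iff_mem,
        map_mul, Algebra.smul_def]
      rfl
    have hlej : ℓ j ∈ P := by
      apply hle
      rw [Submodule.mem_colon_singleton, Submodule.mem_bot]
      exact (Ideal.Quotient.eq_zero_iff_mem (a := ℓ j * z)).2 hz
    have hle2 : JJ ℓ j ≤ P := fun s hs => (hPm s).2 (Ideal.mul_mem_right _ _ hs)
    obtain ⟨a, ha1, ha2⟩ := h j (by omega) P (by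
      intro t ht
      rcases ht.lt_or_eq with h1 | rfl
      · exact hle2 (Ideal.subset_span ⟨t, h1, rfl⟩)
      · exact hlej)
    have h1 := PReg_loc P a (j + 1) ha2
    have h2 := PReg_loc P ℓ j (fun i hi z hz => ⟨1, P.ne_top_iff_one.1 hPp.ne_top, by
      simpa using ih i hi z hz⟩)
    have h3 := rees _ _ j h1 h2 (by omega) (algebraMap C (Localization.AtPrime P) w) (by
      intro i hi
      rw [← map_mul, JJ_map]
      exact Ideal.mem_map_of_mem _ ((hPm _).1 (ha1 i hi)))
    rw [JJ_map, alg_mem_iff] at h3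
    obtain ⟨s, hs, hsw⟩ := h3
    exact hs ((hPm s).2 hsw)

end Depth

section LinAlg
open MvPolynomial

lemma Dp_of_rank {R K : Type*} [CommRing R] [Field K] {N m : ℕ} (φ : Matrix (Fin N) (Fin m) R)
    (P : Ideal (MvPolynomial (Fin N) R)) [P.IsPrime]
    (hP : ∀ j, ∑ i, C (φ i j) * X i ∈ P) (κ : R →+* K)
    (hker : ∀ r, κ r = 0 ↔ r ∈ P.comap (C : R →+* MvPolynomial (Fin N) R))
    (hden : ∀ y : Fin m × Fin N → K, ∃ s, κ s ≠ 0 ∧ ∀ i, ∃ r, κ s * y i = κ r)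
    (c r : ℕ) (hr : r ≤ (φ.map κ).rank)
    (hD : Dp (P.comap (C : R →+* MvPolynomial (Fin N) R)) c) : Dp P (c + r) := by
  classical
  rw [Matrix.rank_eq_finrank_span_row] at hr
  obtain ⟨g, hg, -, hgi⟩ := Submodule.exists_fun_fin_finrank_span_eq K (Set.range (φ.map κ).row)
  choose f0 hf0 using hg
  let f : Fin r → Fin N := fun a => f0 (Fin.castLE hr a)
  have hfi : LinearIndependent K (fun a => (φ.map κ).row (f a)) := by
    have := hgi.comp (Fin.castLE hr) (Fin.castLE_injective hr)
    have h2 : (fun a => (φ.map κ).row (f a)) = g ∘ Fin.castLE hr := by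
      funext a
      exact hf0 _
    rw [h2]
    exact this
  have hf : Function.Injective f := fun a b hab => hfi.injective (by simp [hab])
  let ψ : Matrix (Fin r) (Fin m) K := (φ.map κ).submatrix f id
  have hψ : LinearIndependent K ψ.row := hfi
  have hrank := hψ.rank_matrix
  have hsurj : Function.Surjective ψ.mulVec := by
    have h1 : LinearMap.range ψ.mulVecLin = ⊤ := by
      apply Submodule.eq_top_of_finrank_eq
      rw [Module.finrank_fin_fun]
      rw [Matrix.rank, Fintype.card_fin] at hrank
      exact hrank
    exact LinearMap.range_eq_top.1 h1
  obtain ⟨Nv, hNv⟩ := Matrix.mulVec_surjective_iff_exists_right_inverse.1 hsurj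
  refine Dp_elim c r P hD f hf fun a => ?_
  obtain ⟨s, hs0, hs⟩ := hden (fun t => Nv t.1 a)
  choose ν hν using fun j : Fin m => hs (j, f a)
  simp only at hν
  refine ⟨s, fun h => hs0 ((hker s).2 h), fun i => if i ∈ Set.range f then 0 else
    ∑ j, φ i j * ν j, fun b => by simp, ?_⟩
  have h1 : ∑ i, C (∑ j, φ i j * ν j) * X i ∈ P := by
    have : ∑ i, C (∑ j, φ i j * ν j) * X i = ∑ j, C (ν j) * ∑ i, C (φ i j) * (X i : MvPolynomial (Fin N) R) := by
      simp only [map_sum, Finset.sum_mul, Finset.mul_sum, map_mul]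
      rw [Finset.sum_comm]
      refine Finset.sum_congr rfl fun j _ => Finset.sum_congr rfl fun i _ => ?_
      ring
    rw [this]
    exact Ideal.sum_mem _ fun j _ => Ideal.mul_mem_left _ _ (hP j)
  have h2 : C s * X (f a) = ∑ i, C (if i = f a then s else 0) * (X i : MvPolynomial (Fin N) R) := by
    rw [Finset.sum_eq_single (f a)]
    · simp
    · intro b _ hb; simp [hb]
    · simp
  rw [h2, ← Finset.sum_add_distrib]
  rw [← sub_add_cancel (∑ _, _) (∑ i, C (∑ j, φ i j * ν j) * X i)]
  refine add_mem ?_ h1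
  rw [← Finset.sum_sub_distrib]
  refine Ideal.sum_mem _ fun i _ => ?_
  rw [← add_mul, ← sub_mul, ← map_add, ← map_sub]
  refine Ideal.mul_mem_right _ _ ?_
  change _ ∈ P.comap (C : R →+* MvPolynomial (Fin N) R)
  by_cases hi : i ∈ Set.range f
  · obtain ⟨b, rfl⟩ := hi
    rw [← hker]
    have h3 := congrFun (congrFun hNv b) a
    rw [Matrix.mul_apply] at h3
    have h4 : κ (∑ j, φ (f b) j * ν j) = κ s * (1 : Matrix (Fin r) (Fin r) K) b a := by
      rw [← h3, map_sum, Finset.mul_sum]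
      refine Finset.sum_congr rfl fun j _ => ?_
      rw [map_mul, ← hν]
      simp [ψ]; ring
    rw [map_sub, map_add, h4]
    by_cases hba : b = a
    · subst hba
      simp
    · simp [hba, hf.eq_iff]
  · have : i ≠ f a := fun h => hi ⟨a, h.symm⟩
    simp only [hi, this, if_false, zero_add, sub_self]
    exact zero_mem _

lemma rank_cols {K : Type*} [Field K] {N d m : ℕ} (hm : m ≤ d) (M : Matrix (Fin N) (Fin d) K) :
    M.rank ≤ (M.submatrix id (Fin.castLE hm)).rank + (d - m) := by
  classical
  rw [Matrix.rank_eq_finrank_span_cols, Matrix.rank_eq_finrank_span_cols]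
  let g : Fin (d - m) → Fin d := fun j => ⟨m + j, by omega⟩
  have hle : Submodule.span K (Set.range M.col) ≤
      Submodule.span K (Set.range (M.submatrix id (Fin.castLE hm)).col) ⊔
      Submodule.span K (Set.range fun j => M.col (g j)) := by
    rw [Submodule.span_le]
    rintro _ ⟨j, rfl⟩
    by_cases hj : (j : ℕ) < m
    · exact Submodule.mem_sup_left (Submodule.subset_span ⟨⟨j, hj⟩, rfl⟩)
    · refine Submodule.mem_sup_right (Submodule.subset_span ⟨⟨j - m, by omega⟩, ?_⟩)
      have : g ⟨j - m, by omega⟩ = j := by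
        apply Fin.ext; simp only [g]; omega
      simp only [this]
  refine (Submodule.finrank_mono hle).trans ((Submodule.finrank_add_le_finrank_add_finrank _ _).trans ?_)
  gcongr
  have := finrank_range_le_card (R := K) (fun j => M.col (g j))
  rwa [Fintype.card_fin] at this

lemma rank_Gd {R K E : Type} [CommRing R] [Field K] [AddCommGroup E] [Module R E] {N d : ℕ}
    (φ : Matrix (Fin N) (Fin d) R) (π : (Fin N → R) →ₗ[R] E) (hsurj : Function.Surjective π)
    (hker : LinearMap.ker π = LinearMap.range φ.mulVecLin) (p : Ideal R) [p.IsPrime]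
    (κ : R →+* K) (hκ : ∀ r, κ r = 0 ↔ r ∈ p)
    (s : Finset (LocalizedModule p.primeCompl E))
    (hs : Submodule.span (Localization.AtPrime p)
          (s : Set (LocalizedModule p.primeCompl E)) = ⊤) : N ≤ s.card + (φ.map κ).rank := by
  classical
  have hrep : ∀ y : LocalizedModule p.primeCompl E, ∃ w : Fin N → R, ∃ t : p.primeCompl,
      y = LocalizedModule.mk (π w) t := by
    intro y
    induction y using LocalizedModule.induction_on with
    | _ m t =>
      obtain ⟨w, rfl⟩ := hsurj m
      exact ⟨w, t, rfl⟩
  choose w t hwt using hrep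
  let kv : (Fin N → R) → (Fin N → K) := fun v => κ ∘ v
  let V : Submodule K (Fin N → K) := Submodule.span K (Set.range fun y : s => kv (w y)) ⊔
    LinearMap.range (φ.map κ).mulVecLin
  let M : Submodule R (Fin N → R) :=
    { carrier := {v | kv v ∈ V}
      add_mem' := by
        intro a b ha hb
        have : kv (a + b) = kv a + kv b := by ext i; simp [kv]
        simp only [Set.mem_ofPred_eq] at ha hb ⊢
        rw [this]; exact add_mem ha hb
      zero_mem' := by
        have : kv 0 = 0 := by ext i; simp [kv]
        simp only [Set.mem_ofPred_eq, this]
        exact zero_mem _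
      smul_mem' := by
        intro r a ha
        have : kv (r • a) = κ r • kv a := by ext i; simp [kv]
        simp only [Set.mem_ofPred_eq] at ha ⊢
        rw [this]; exact V.smul_mem _ ha }
  have hMk : ∀ v, π v = 0 → v ∈ M := by
    intro v hv
    have : v ∈ LinearMap.ker π := hv
    rw [hker] at this
    obtain ⟨x, rfl⟩ := this
    refine Submodule.mem_sup_right ⟨κ ∘ x, ?_⟩
    funext i
    exact (RingHom.map_mulVec κ φ x i).symm
  have hMu : ∀ u ∉ p, ∀ v, u • v ∈ M → v ∈ M := by
    intro u hu v hv
    have h1 : kv (u • v) = κ u • kv v := by ext i; simp [kv]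
    have h2 : kv (u • v) ∈ V := hv
    have h3 : κ u ≠ 0 := fun h => hu ((hκ u).1 h)
    rw [h1] at h2
    exact (Submodule.smul_mem_iff V h3).1 h2
  have hMall : ∀ y ∈ Submodule.span (Localization.AtPrime p)
      (s : Set (LocalizedModule p.primeCompl E)), ∃ u : p.primeCompl, ∃ v ∈ M,
        y = LocalizedModule.mk (π v) u := by
    intro y hy
    induction hy using Submodule.span_induction with
    | mem x hx =>
      refine ⟨t x, w x, ?_, hwt x⟩
      exact Submodule.mem_sup_left (Submodule.subset_span ⟨⟨x, hx⟩, rfl⟩)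
    | zero => exact ⟨1, 0, zero_mem _, by simp⟩
    | add x y _ _ hx hy =>
      obtain ⟨u, v, hv, rfl⟩ := hx
      obtain ⟨u', v', hv', rfl⟩ := hy
      refine ⟨u * u', u' • v + u • v', add_mem (M.smul_mem _ hv) (M.smul_mem _ hv'), ?_⟩
      rw [LocalizedModule.mk_add_mk, map_add]
      congr 2
      · exact (map_smul π (u' : R) v).symm
      · exact (map_smul π (u : R) v').symm
    | smul a x _ hx =>
      obtain ⟨u, v, hv, rfl⟩ := hx
      induction a using Localization.induction_on with
      | _ a =>
        obtain ⟨r, q⟩ := a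
        refine ⟨q * u, r • v, M.smul_mem _ hv, ?_⟩
        rw [LocalizedModule.mk_smul_mk, map_smul]
  have hMtop : ∀ v, v ∈ M := by
    intro v
    obtain ⟨u, v', hv', h⟩ := hMall (LocalizedModule.mk (π v) 1) (by rw [hs]; trivial)
    obtain ⟨q, hq⟩ := LocalizedModule.mk_eq.1 h
    have h1 : π ((q : R) • (u : R) • v - (q : R) • v') = 0 := by
      rw [map_sub, map_smul, map_smul, map_smul, sub_eq_zero]
      rw [one_smul] at hq
      exact hq
    have h2 := hMk _ h1
    have h3 := add_mem h2 (M.smul_mem (q : R) hv')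
    rw [sub_add_cancel] at h3
    exact hMu u u.2 _ (hMu q q.2 _ h3)
  have hV : V = ⊤ := by
    rw [eq_top_iff]
    intro z _
    have : z = ∑ i, z i • kv (Pi.single i 1) := by
      ext j
      simp [kv, Finset.sum_apply, Pi.single_apply, apply_ite κ]
    rw [this]
    exact Submodule.sum_mem _ fun i _ => V.smul_mem _ (hMtop _)
  have h1 : N = Module.finrank K V := by rw [hV]; simp
  refine h1.le.trans ((Submodule.finrank_add_le_finrank_add_finrank _ _).trans ?_)
  gcongr
  · have := finrank_range_le_card (R := K) (fun y : s => kv (w y))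
    rw [Fintype.card_coe] at this
    exact this
  · rfl

lemma rank_inj {R K : Type*} [CommRing R] [Field K] {N d : ℕ}
    (φ : Matrix (Fin N) (Fin d) R) (hinj : Function.Injective φ.mulVecLin)
    (κ : R →+* K) (hκ : Function.Injective κ)
    (hden : ∀ y : Fin d → K, ∃ s, κ s ≠ 0 ∧ ∀ i, ∃ r, κ s * y i = κ r) :
    (φ.map κ).rank = d := by
  have h1 : Function.Injective (φ.map κ).mulVecLin := by
    rw [← LinearMap.ker_eq_bot, LinearMap.ker_eq_bot']
    intro y hy
    obtain ⟨s, hs, hr⟩ := hden y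
    choose r hr using hr
    have h2 : κ ∘ r = κ s • y := by ext i; simp [hr]
    have h3 : φ.mulVecLin r = 0 := by
      funext i
      apply hκ
      have := RingHom.map_mulVec κ φ r i
      rw [h2, Matrix.mulVec_smul] at this
      have hy' : (φ.map κ).mulVec y = 0 := hy
      rw [hy'] at this
      simpa using this
    have h4 : r = 0 := hinj (by rw [h3, map_zero])
    rw [h4] at h2
    have h5 : κ s • y = 0 := by rw [← h2]; ext i; simp
    exact (smul_eq_zero.1 h5).resolve_left hs
  rw [Matrix.rank, LinearMap.finrank_range_of_inj h1, Module.finrank_fin_fun]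

end LinAlg

section RegEll

/-- `B` as a polynomial ring over `R`. -/
def Eq1 (k : Type) [Field k] (d N : ℕ) :
    MvPolynomial (Fin d ⊕ Fin N) k ≃ₐ[k] MvPolynomial (Fin N) (MvPolynomial (Fin d) k) :=
  (renameEquiv k (Equiv.sumComm (Fin d) (Fin N))).trans (sumAlgEquiv k (Fin N) (Fin d))

lemma Eq1_X (k : Type) [Field k] (d N : ℕ) (j : Fin N) : Eq1 k d N (X (Sum.inr j)) = X j := by
  simp [Eq1]

lemma Eq1_inl (k : Type) [Field k] (d N : ℕ) (a : MvPolynomial (Fin d) k) :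
    Eq1 k d N (rename Sum.inl a) = C a := by
  induction a using MvPolynomial.induction_on with
  | C a => simp [Eq1]
  | add p q hp hq => rw [map_add, map_add, hp, hq, map_add]
  | mul_X p i hp =>
    rw [map_mul, map_mul, hp, map_mul]
    congr 1
    simp [Eq1]

lemma ell_Dp0 (k : Type) [Field k] (d e : ℕ)
    (E : Type) [AddCommGroup E] [Module (MvPolynomial (Fin d) k) E]
    (φ : Matrix (Fin (d + e)) (Fin d) (MvPolynomial (Fin d) k))
    (hinj : Function.Injective φ.mulVecLin)
    (π : (Fin (d + e) → MvPolynomial (Fin d) k) →ₗ[MvPolynomial (Fin d) k] E)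
    (hsurj : Function.Surjective π)
    (hker : LinearMap.ker π = LinearMap.range φ.mulVecLin)
    (hGd : ∀ (p : Ideal (MvPolynomial (Fin d) k)) (_ : p.IsPrime) (c : ℕ),
      ringKrullDim (Localization.AtPrime p) = (c : WithBot ℕ∞) → 1 ≤ c → c ≤ d - 1 →
      ∃ s : Finset (LocalizedModule p.primeCompl E), s.card ≤ c + e - 1 ∧
        Submodule.span (Localization.AtPrime p)
          (s : Set (LocalizedModule p.primeCompl E)) = ⊤)
    (m : ℕ) (hm : m ≤ d) (P : Ideal (MvPolynomial (Fin (d + e)) (MvPolynomial (Fin d) k)))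
    [P.IsPrime] (hP : ∀ j : Fin d, (j : ℕ) < m → ∑ i, C (φ i j) * X i ∈ P) : Dp P m := by
  set p := P.comap (C : MvPolynomial (Fin d) k →+* _) with hp
  have hpp : p.IsPrime := inferInstance
  by_cases hc : (m : ℕ∞) ≤ p.height
  · exact Dp_free P m (Dp_field k d p m hc)
  have hlt : p.height < m := not_le.1 hc
  obtain ⟨c, hcc⟩ := ENat.ne_top_iff_exists.1 hlt.ne_top
  have hcm : c < m := by rw [← hcc] at hlt; exact_mod_cast hlt
  have hDc : Dp p c := Dp_field k d p c hcc.le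
  let K := FractionRing (MvPolynomial (Fin d) k ⧸ p)
  let κ : MvPolynomial (Fin d) k →+* K := (algebraMap _ K).comp (Ideal.Quotient.mk p)
  have hκ : ∀ r, κ r = 0 ↔ r ∈ p := by
    intro r
    rw [← Ideal.Quotient.eq_zero_iff_mem]
    exact map_eq_zero_iff (algebraMap (MvPolynomial (Fin d) k ⧸ p) K)
      (IsFractionRing.injective (MvPolynomial (Fin d) k ⧸ p) K)
  have hden : ∀ (ι : Type) [Finite ι] (y : ι → K), ∃ s, κ s ≠ 0 ∧ ∀ i, ∃ r, κ s * y i = κ r := by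
    intro ι _ y
    obtain ⟨b, hb⟩ := IsLocalization.exist_integer_multiples_of_finite
      (nonZeroDivisors (MvPolynomial (Fin d) k ⧸ p)) y
    obtain ⟨s, hs⟩ := Ideal.Quotient.mk_surjective (b : MvPolynomial (Fin d) k ⧸ p)
    have hκs : κ s = algebraMap _ K (b : MvPolynomial (Fin d) k ⧸ p) := by
      rw [← hs]; rfl
    refine ⟨s, ?_, fun i => ?_⟩
    · rw [hκs]
      exact IsFractionRing.to_map_ne_zero_of_mem_nonZeroDivisors b.2
    · obtain ⟨r, hr⟩ := hb i
      obtain ⟨r, rfl⟩ := Ideal.Quotient.mk_surjective r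
      refine ⟨r, ?_⟩
      rw [hκs, ← Algebra.smul_def]
      exact hr.symm
  have hrank : d ≤ c + (φ.map κ).rank := by
    rcases Nat.eq_zero_or_pos c with h0 | h0
    · have hbot : p = ⊥ := by
        rw [← Ideal.height_eq_zero_iff_eq_bot, ← hcc, h0]; rfl
      have := rank_inj φ hinj κ (by
        rw [injective_iff_map_eq_zero]
        intro r hr
        rw [hκ, hbot] at hr
        simpa using hr) (hden _)
      omega
    · obtain ⟨s, hs1, hs2⟩ := hGd p hpp c (by
        rw [IsLocalization.AtPrime.ringKrullDim_eq_height p, ← hcc]; rfl) h0 (by omega)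
      have := rank_Gd φ π hsurj hker p κ hκ s hs2
      omega
  have hcol := rank_cols hm (φ.map κ)
  have hfin := Dp_of_rank (φ.submatrix id (Fin.castLE hm)) P (fun j => hP _ j.2) κ hκ (hden _) c
    (m - c) (by
      have : (φ.submatrix id (Fin.castLE hm)).map κ =
        (φ.map κ).submatrix id (Fin.castLE hm) := rfl
      rw [this]; omega) hDc
  rwa [show c + (m - c) = m by omega] at hfin

lemma ell_reg (k : Type) [Field k] (d e : ℕ)
    (E : Type) [AddCommGroup E] [Module (MvPolynomial (Fin d) k) E]
    (φ : Matrix (Fin (d + e)) (Fin d) (MvPolynomial (Fin d) k))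
    (hinj : Function.Injective φ.mulVecLin)
    (π : (Fin (d + e) → MvPolynomial (Fin d) k) →ₗ[MvPolynomial (Fin d) k] E)
    (hsurj : Function.Surjective π)
    (hker : LinearMap.ker π = LinearMap.range φ.mulVecLin)
    (hGd : ∀ (p : Ideal (MvPolynomial (Fin d) k)) (_ : p.IsPrime) (c : ℕ),
      ringKrullDim (Localization.AtPrime p) = (c : WithBot ℕ∞) → 1 ≤ c → c ≤ d - 1 →
      ∃ s : Finset (LocalizedModule p.primeCompl E), s.card ≤ c + e - 1 ∧
        Submodule.span (Localization.AtPrime p)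
          (s : Set (LocalizedModule p.primeCompl E)) = ⊤)
    (ℓ : Fin d → B k d (d + e))
    (hℓ : ∀ i, ℓ i = ∑ j, (rename Sum.inl (φ j i)) * X (Sum.inr j))
    (l : ℕ → B k d (d + e)) (hl : ∀ i : Fin d, l i = ℓ i) : Reg l d := by
  apply reg_of_Dp
  intro i hi P hP hmem
  let e0 := (Eq1 k d (d + e)).toRingEquiv.symm
  apply Dp_equiv e0
  have hpr : (P.comap (e0 : MvPolynomial (Fin (d + e)) (MvPolynomial (Fin d) k) →+* MvPolynomial (Fin d ⊕ Fin (d + e)) k)).IsPrime := inferInstance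
  refine ell_Dp0 k d e E φ hinj π hsurj hker hGd (i + 1) (by omega) _ fun j hj => ?_
  have h1 : Eq1 k d (d + e) (ℓ j) = ∑ i, C (φ i j) * X i := by
    rw [hℓ, map_sum]
    refine Finset.sum_congr rfl fun t _ => ?_
    rw [map_mul, Eq1_inl, Eq1_X]
  rw [← h1, Ideal.mem_comap]
  have h2 : (e0 : MvPolynomial (Fin (d + e)) (MvPolynomial (Fin d) k) →+* MvPolynomial (Fin d ⊕ Fin (d + e)) k) (Eq1 k d (d + e) (ℓ j)) = ℓ j :=
    (Eq1 k d (d + e)).symm_apply_apply _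
  rw [h2, ← hl]
  exact hmem j (by omega)

lemma x_reg (k : Type) [Field k] (d n : ℕ) (a : ℕ → B k d n)
    (ha : ∀ i : Fin d, a i = X (Sum.inl i)) : Reg a d := by
  intro j hj z hz
  have hJ : JJ a j = Ideal.span ((X : _ → B k d n) '' {s | ∃ i : Fin d, (i : ℕ) < j ∧ s = Sum.inl i}) := by
    unfold JJ
    congr 1
    ext y
    constructor
    · rintro ⟨i, hi, rfl⟩
      have hi' : i < j := hi
      exact ⟨Sum.inl ⟨i, by omega⟩, ⟨⟨i, by omega⟩, hi', rfl⟩, (ha ⟨i, by omega⟩).symm⟩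
    · rintro ⟨_, ⟨i, hi, rfl⟩, rfl⟩
      exact ⟨i, hi, ha i⟩
  rw [hJ, mem_ideal_span_X_image] at hz ⊢
  intro m hm
  rw [ha ⟨j, hj⟩, mul_comm] at hz
  obtain ⟨s, ⟨i, hi, rfl⟩, hs⟩ := hz (m + Finsupp.single (Sum.inl ⟨j, hj⟩) 1) (by
    rw [mem_support_iff, coeff_mul_X]
    exact mem_support_iff.1 hm)
  refine ⟨_, ⟨i, hi, rfl⟩, ?_⟩
  have hne : (Sum.inl ⟨j, hj⟩ : Fin d ⊕ Fin n) ≠ Sum.inl i := by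
    intro h
    have := Sum.inl.inj h
    rw [← this] at hi
    exact lt_irrefl _ hi
  rw [Finsupp.add_apply, Finsupp.single_eq_of_ne' hne, add_zero] at hs
  exact hs

end RegEll

section Assembly

/-- Component of a product with a homogeneous element. -/
lemma whc_mul_of_mem {k : Type} [Field k] {σ : Type} (w : σ → ℕ) (c D : MvPolynomial σ k) (m i : ℕ)
    (hD : IsWeightedHomogeneous w D m) (h : m ≤ i) :
    weightedHomogeneousComponent w i (c * D) =
      weightedHomogeneousComponent w (i - m) c * D := by
  let _ := weightedGradedAlgebra k w
  have := DirectSum.coe_decompose_mul_of_right_mem_of_le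
    (weightedHomogeneousSubmodule k w) (a := c) (b := D) hD h
  rw [← weightedDecomposition.decompose'_apply k w (c * D) i,
    ← weightedDecomposition.decompose'_apply k w c (i - m)]
  exact this

lemma mxB_torsion {k : Type} [Field k] {d n : ℕ} (L : Ideal (B k d n)) (g : B k d n) :
    Ideal.Quotient.mk L g ∈ H0 k d n L ↔ ∃ N : ℕ, ∀ a ∈ mxB k d n ^ N, a * g ∈ L := by
  unfold H0
  rw [Submodule.mem_iSup_of_directed]
  · refine exists_congr fun N => ?_
    rw [Submodule.mem_torsionBySet_iff]
    constructor
    · intro h a ha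
      have := h ⟨a, ha⟩
      rw [← Ideal.Quotient.eq_zero_iff_mem]
      exact this
    · rintro h ⟨a, ha⟩
      have := h a ha
      rw [← Ideal.Quotient.eq_zero_iff_mem] at this
      exact this
  · apply Monotone.directed_le
    intro N M hNM
    apply Submodule.torsionBySet_le_torsionBySet_of_subset
    exact Ideal.pow_le_pow_right hNM

lemma mem_mxB {k : Type} [Field k] {d n : ℕ} (g : B k d n) (j : ℕ) (hj : 0 < j)
    (hg : g.IsWeightedHomogeneous (wx d n) j) : g ∈ mxB k d n := by
  have : mxB k d n = Ideal.span ((X : _ → B k d n) '' Set.range Sum.inl) := by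
    unfold mxB
    congr 1
    rw [← Set.range_comp]
    rfl
  rw [this, mem_ideal_span_X_image]
  intro m hm
  have h := hg (mem_support_iff.1 hm)
  by_contra hcon
  push Not at hcon
  have : Finsupp.weight (wx d n) m = 0 := by
    rw [Finsupp.weight_apply, Finsupp.sum]
    refine Finset.sum_eq_zero fun s hs => ?_
    rcases s with i | i
    · rw [hcon _ ⟨i, rfl⟩]; simp
    · simp [wx]
  omega

lemma deg_zero_range {k : Type} [Field k] {d n : ℕ} (g : B k d n)
    (hg : g.IsWeightedHomogeneous (wx d n) 0) : ∃ c : T k n, algebraMap (T k n) (B k d n) c = g := by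
  have := exists_rename_eq_of_vars_subset_range g (Sum.inr : Fin n → Fin d ⊕ Fin n)
    Sum.inr_injective (by
      intro s hs
      rcases s with i | i
      · exfalso
        obtain ⟨m, hm, hs⟩ := (mem_vars_iff_mem_support _).1 hs
        have h := hg (mem_support_iff.1 hm)
        rw [Finsupp.weight_apply, Finsupp.sum, Finset.sum_eq_zero_iff] at h
        have := h _ hs
        simp [wx] at this
        exact (Finsupp.mem_support_iff.1 hs) this
      · exact ⟨i, rfl⟩)
  obtain ⟨c, hc⟩ := this
  exact ⟨c, hc⟩

lemma SxDeg_mem {k : Type} [Field k] {d n : ℕ} (L : Ideal (B k d n)) (j : ℕ) (z : B k d n ⧸ L)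
    (hz : z ∈ SxDeg k d n L j) :
    ∃ g : B k d n, g.IsWeightedHomogeneous (wx d n) j ∧ Ideal.Quotient.mk L g = z := by
  unfold SxDeg at hz
  induction hz using Submodule.span_induction with
  | mem x hx => obtain ⟨g, hg, rfl⟩ := hx; exact ⟨g, hg, rfl⟩
  | zero => exact ⟨0, isWeightedHomogeneous_zero _ _ _, map_zero _⟩
  | add x y _ _ hx hy =>
    obtain ⟨g, hg, rfl⟩ := hx
    obtain ⟨h, hh, rfl⟩ := hy
    exact ⟨g + h, hg.add hh, map_add _ _ _⟩
  | smul c x _ hx =>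
    obtain ⟨g, hg, rfl⟩ := hx
    refine ⟨algebraMap (T k n) (B k d n) c * g, ?_, ?_⟩
    · have h0 : IsWeightedHomogeneous (wx d n) (algebraMap (T k n) (B k d n) c) 0 := by
        change IsWeightedHomogeneous (wx d n) (rename Sum.inr c) 0
        intro m hm
        obtain ⟨u, rfl, _⟩ := coeff_rename_ne_zero _ _ _ hm
        rw [Finsupp.weight_apply, Finsupp.sum_mapDomain_index (by simp) (by intros; simp [add_mul])]
        simp [wx]
      simpa using h0.mul hg
    · exact congrArg (Ideal.Quotient.mk L) (Algebra.smul_def c g).symm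

lemma bi_to_x {k : Type} [Field k] {d n : ℕ} (g : B k d n) (p : ℕ × ℕ)
    (hg : g.IsWeightedHomogeneous (bwt d n) p) : g.IsWeightedHomogeneous (wx d n) p.1 := by
  intro m hm
  rw [← hg hm, Finsupp.weight_apply, Finsupp.weight_apply, Finsupp.sum, Finsupp.sum, Prod.fst_sum]
  refine Finset.sum_congr rfl fun s _ => ?_
  rcases s with i | i <;> simp [wx, bwt]

lemma det_hom {k : Type} [Field k] {d n : ℕ} (hd : 3 ≤ d) (M : Matrix (Fin d) (Fin d) (B k d n))
    (hM : ∀ (t j : Fin d),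
      ((j : ℕ) < d - 2 → M t j ∈ weightedHomogeneousSubmodule k (bwt d n) (0, 1)) ∧
      (d - 2 ≤ (j : ℕ) → M t j ∈ weightedHomogeneousSubmodule k (bwt d n) (1, 1))) :
    M.det ∈ weightedHomogeneousSubmodule k (bwt d n) (2, d) := by
  rw [Matrix.det_apply]
  refine Submodule.sum_mem _ fun σ _ => ?_
  have h : (∏ i, M (σ i) i).IsWeightedHomogeneous (bwt d n)
      (∑ i : Fin d, if (i : ℕ) < d - 2 then ((0, 1) : ℕ × ℕ) else (1, 1)) := by
    apply IsWeightedHomogeneous.prod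
    intro i _
    split_ifs with hi
    · exact (hM _ i).1 hi
    · exact (hM _ i).2 (not_lt.1 hi)
  have hsum : (∑ i : Fin d, if (i : ℕ) < d - 2 then ((0, 1) : ℕ × ℕ) else (1, 1)) = (2, d) := by
    obtain ⟨m, rfl⟩ : ∃ m, d = m + 2 := ⟨d - 2, by omega⟩
    rw [Fin.sum_univ_castSucc, Fin.sum_univ_castSucc]
    simp
  rw [hsum] at h
  rcases Int.units_eq_one_or (Equiv.Perm.sign σ) with hs | hs
  · rw [hs, one_smul]; exact h
  · rw [hs, Units.neg_smul, one_smul]; exact Submodule.neg_mem _ h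

lemma lin_whc {k : Type} [Field k] {σ : Type} {d : ℕ} (w : σ → ℕ) (ℓ : Fin d → MvPolynomial σ k)
    (hℓ : ∀ i, ∃ j, (ℓ i).IsWeightedHomogeneous w j) (g : MvPolynomial σ k)
    (hg : g ∈ Ideal.span (Set.range ℓ)) (j : ℕ) :
    weightedHomogeneousComponent w j g ∈ Ideal.span (Set.range ℓ) := by
  let _ := weightedGradedAlgebra k w
  refine weightedHomogeneousComponent_mem_of_mem k w ?_ hg j
  apply Ideal.homogeneous_span
  rintro _ ⟨i, rfl⟩
  exact hℓ i

/-- Abstract form of the final argument. -/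
lemma lemS {k : Type} [Field k] {d n : ℕ} (L : Ideal (B k d n)) (D : B k d n)
    (hD : D.IsWeightedHomogeneous (wx d n) 2)
    (hLhom : ∀ g ∈ L, ∀ j, weightedHomogeneousComponent (wx d n) j g ∈ L)
    (hxD : ∀ a ∈ mxB k d n, a * D ∈ L)
    (hW : ∀ g, (∀ i : Fin d, X (Sum.inl i) * g ∈ L) → ∃ c, g - c * D ∈ L)
    (N : ℕ) : ∀ (j : ℕ) (_ : 3 ≤ j) (g : B k d n) (_ : g.IsWeightedHomogeneous (wx d n) j)
      (_ : ∀ a ∈ mxB k d n ^ N, a * g ∈ L), g ∈ L := by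
  induction N with
  | zero =>
    intro j _ g _ h
    simpa using h 1 (by simp)
  | succ N ih =>
    intro j hj g hg h
    obtain ⟨c, hc⟩ := hW g (fun i => by
      refine ih (j + 1) (by omega) _ ?_ ?_
      · have := (isWeightedHomogeneous_X k (wx d n) (Sum.inl i)).mul hg
        rw [add_comm]
        exact this
      · intro a ha
        rw [← mul_assoc]
        apply h
        rw [pow_succ]
        exact Ideal.mul_mem_mul ha (Ideal.subset_span ⟨i, rfl⟩))
    have h1 := hLhom _ hc j
    rw [map_sub, whc_mul_of_mem _ _ _ _ _ hD (by omega),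
      hg.weightedHomogeneousComponent_same] at h1
    have h2 := hxD _ (mem_mxB _ (j - 2) (by omega)
      (weightedHomogeneousComponent_isWeightedHomogeneous (w := wx d n) (j - 2) c))
    simpa using L.add_mem h1 h2

lemma final {k : Type} [Field k] {d n : ℕ} (L : Ideal (B k d n)) (D : B k d n)
    (hD : D.IsWeightedHomogeneous (wx d n) 2)
    (hLhom : ∀ g ∈ L, ∀ j, weightedHomogeneousComponent (wx d n) j g ∈ L)
    (hxD : ∀ a ∈ mxB k d n, a * D ∈ L)
    (hW : ∀ g, (∀ i : Fin d, X (Sum.inl i) * g ∈ L) → ∃ c, g - c * D ∈ L) :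
    AcompZ k d n L 2 = Submodule.span (T k n) {Ideal.Quotient.mk L D} := by
  have hS : SxDegZ k d n L 2 = SxDeg k d n L 2 := by
    unfold SxDegZ
    rw [if_pos (by norm_num)]
    rfl
  unfold AcompZ
  rw [hS]
  apply le_antisymm
  · rintro z ⟨hz1, hz2⟩
    obtain ⟨g, hg, rfl⟩ := SxDeg_mem L 2 z hz2
    obtain ⟨N, hN⟩ := (mxB_torsion L g).1 hz1
    obtain ⟨c, hc⟩ := hW g (fun i => by
      refine lemS L D hD hLhom hxD hW N 3 le_rfl _ ?_ ?_
      · exact (isWeightedHomogeneous_X k (wx d n) (Sum.inl i)).mul hg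
      · intro a ha
        rw [mul_left_comm]
        exact L.mul_mem_left _ (hN a ha))
    have h1 := hLhom _ hc 2
    rw [map_sub, whc_mul_of_mem _ _ _ _ _ hD le_rfl,
      hg.weightedHomogeneousComponent_same] at h1
    obtain ⟨c0, hc0⟩ := deg_zero_range _
      (weightedHomogeneousComponent_isWeightedHomogeneous (w := wx d n) (2 - 2) c)
    rw [Submodule.mem_span_singleton]
    refine ⟨c0, ?_⟩
    rw [Ideal.Quotient.eq.2 h1, ← hc0]
    exact congrArg (Ideal.Quotient.mk L) (Algebra.smul_def c0 D)
  · rw [Submodule.span_le, Set.singleton_subset_iff]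
    refine ⟨(mxB_torsion L D).2 ⟨1, ?_⟩, Submodule.subset_span ⟨D, hD, rfl⟩⟩
    rwa [pow_one]

end Assembly

theorem A2_generator
    (d e : ℕ) (hd : 3 ≤ d)
    (E : Type) [AddCommGroup E] [Module (MvPolynomial (Fin d) k) E]
    [Module.Finite (MvPolynomial (Fin d) k) E]
    -- `E` is torsion-free
    (htf : Submodule.torsion (MvPolynomial (Fin d) k) E = ⊥)
    -- `0 → R^d →φ R^{d+e} →π E → 0` is a (minimal) free resolution, so `pd E = 1`,
    -- `rank E = e`
    (φ : Matrix (Fin (d + e)) (Fin d) (MvPolynomial (Fin d) k))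
    (hinj : Function.Injective φ.mulVecLin)
    (π : (Fin (d + e) → MvPolynomial (Fin d) k) →ₗ[MvPolynomial (Fin d) k] E)
    (hsurj : Function.Surjective π)
    (hker : LinearMap.ker π = LinearMap.range φ.mulVecLin)
    -- `φ = [φ′ | φ″]`: the first `d−2` columns are linear, the last two are quadrics
    (hdeg : ∀ (i : Fin (d + e)) (j : Fin d),
      ((j : ℕ) < d - 2 → φ i j ∈ homogeneousSubmodule (Fin d) k 1) ∧
      (d - 2 ≤ (j : ℕ) → φ i j ∈ homogeneousSubmodule (Fin d) k 2))
    -- `I_1(φ) = (x_1,…,x_d)`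
    (hI1 : Ideal.span {r : MvPolynomial (Fin d) k | ∃ i j, φ i j = r} =
      Ideal.span (Set.range X))
    -- `E` is minimally generated by `μ(E) = d+e` elements
    (hμ : ∀ s : Finset E, Submodule.span (MvPolynomial (Fin d) k) (s : Set E) = ⊤ →
      d + e ≤ s.card)
    -- `E` satisfies `G_d`
    (hGd : ∀ (p : Ideal (MvPolynomial (Fin d) k)) (_ : p.IsPrime) (c : ℕ),
      ringKrullDim (Localization.AtPrime p) = (c : WithBot ℕ∞) → 1 ≤ c → c ≤ d - 1 →
      ∃ s : Finset (LocalizedModule p.primeCompl E), s.card ≤ c + e - 1 ∧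
        Submodule.span (Localization.AtPrime p)
          (s : Set (LocalizedModule p.primeCompl E)) = ⊤)
    -- the defining ideal `L` of the symmetric algebra: `[ℓ_1 … ℓ_d] = [y_1 … y_{d+e}]·φ`
    (ℓ : Fin d → B k d (d + e))
    (hℓ : ∀ i, ℓ i = ∑ j, (rename Sum.inl (φ j i)) * X (Sum.inr j))
    (L : Ideal (B k d (d + e))) (hL : L = Ideal.span (Set.range ℓ))
    -- `B(φ)`: a Jacobian dual of `φ` with respect to `x_1,…,x_d`, i.e. a `d×d` matrix of
    -- bihomogeneous elements with `[y_1 … y_{d+e}]·φ = [x_1 … x_d]·B(φ)`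
    (Bφ : Matrix (Fin d) (Fin d) (B k d (d + e)))
    (hBφhom : ∀ (t j : Fin d),
      ((j : ℕ) < d - 2 → Bφ t j ∈ weightedHomogeneousSubmodule k (bwt d (d + e)) (0, 1)) ∧
      (d - 2 ≤ (j : ℕ) → Bφ t j ∈ weightedHomogeneousSubmodule k (bwt d (d + e)) (1, 1)))
    (hBφ : ∀ j, ℓ j = ∑ t, X (Sum.inl t) * Bφ t j) :
    AcompZ k d (d + e) L 2 =
      Submodule.span (T k (d + e)) {Ideal.Quotient.mk L Bφ.det} ∧
    Bφ.det ∈ weightedHomogeneousSubmodule k (bwt d (d + e)) (2, d) := by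
  have hdet := det_hom hd Bφ hBφhom
  refine ⟨?_, hdet⟩
  subst hL
  have hℓhom : ∀ i, ∃ j, (ℓ i).IsWeightedHomogeneous (wx d (d + e)) j := by
    intro j
    by_cases hj : (j : ℕ) < d - 2
    · refine ⟨1 + 0, ?_⟩
      rw [hBφ]
      refine IsWeightedHomogeneous.sum _ _ _ fun t _ => ?_
      exact (isWeightedHomogeneous_X k (wx d (d + e)) (Sum.inl t)).mul
        (bi_to_x _ _ ((hBφhom t j).1 hj))
    · refine ⟨1 + 1, ?_⟩
      rw [hBφ]
      refine IsWeightedHomogeneous.sum _ _ _ fun t _ => ?_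
      exact (isWeightedHomogeneous_X k (wx d (d + e)) (Sum.inl t)).mul
        (bi_to_x _ _ ((hBφhom t j).2 (not_lt.1 hj)))
  let l : ℕ → B k d (d + e) := fun i => if h : i < d then ℓ ⟨i, h⟩ else 0
  let a : ℕ → B k d (d + e) := fun i => if h : i < d then X (Sum.inl ⟨i, h⟩) else 0
  let b : ℕ → Fin d → B k d (d + e) := fun j t => if h : j < d then Bφ t ⟨j, h⟩ else 0
  have hl : ∀ i : Fin d, l i = ℓ i := fun i => dif_pos i.2
  have ha : ∀ i : Fin d, a i = X (Sum.inl i) := fun i => dif_pos i.2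
  have hJ : JJ l d = Ideal.span (Set.range ℓ) := by
    unfold JJ
    congr 1
    ext y
    constructor
    · rintro ⟨i, hi, rfl⟩
      exact ⟨⟨i, hi⟩, (hl ⟨i, hi⟩).symm⟩
    · rintro ⟨i, rfl⟩
      exact ⟨i, i.2, hl i⟩
  have hbdet : (Matrix.of (fun i : Fin d => b i)).det = Bφ.det := by
    rw [← Matrix.det_transpose]
    congr 1
    ext1 i j
    exact dif_pos j.2
  have hreg := ell_reg k d e E φ hinj π hsurj hker hGd ℓ hℓ l hl
  have hxreg := x_reg k d (d + e) a ha
  refine final _ _ (bi_to_x _ _ hdet) (lin_whc _ _ hℓhom) ?_ ?_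
  · have key : ∀ t : Fin d, X (Sum.inl t) * Bφ.det ∈ Ideal.span (Set.range ℓ) := by
      intro t
      have h1 : Matrix.vecMul (fun s : Fin d => (X (Sum.inl s) : B k d (d + e))) Bφ = ℓ := by
        funext j
        rw [hBφ]
        rfl
      have h2 : Matrix.vecMul ℓ Bφ.adjugate t = X (Sum.inl t) * Bφ.det := by
        rw [← h1, Matrix.vecMul_vecMul, Matrix.mul_adjugate, Matrix.vecMul_smul,
          Matrix.vecMul_one, Pi.smul_apply, smul_eq_mul, mul_comm]
      rw [← h2]
      change ∑ j, ℓ j * Bφ.adjugate j t ∈ _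
      refine Ideal.sum_mem (Ideal.span (Set.range ℓ)) fun j _ => ?_
      exact Ideal.mul_mem_right _ (Ideal.span (Set.range ℓ)) (Ideal.subset_span ⟨j, rfl⟩)
    intro c hc
    unfold mxB at hc
    induction hc using Submodule.span_induction with
    | mem x hx => obtain ⟨t, rfl⟩ := hx; exact key t
    | zero => rw [zero_mul]; exact Ideal.zero_mem _
    | add x y _ _ hx hy => rw [add_mul]; exact Ideal.add_mem _ hx hy
    | smul r x _ hx => rw [smul_eq_mul, mul_assoc]; exact Ideal.mul_mem_left _ _ hx
  · intro g hg
    rw [← hJ, ← hbdet]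
    refine wiebe b a l hxreg hreg ?_ g ?_
    · intro j hj
      rw [hl ⟨j, hj⟩, hBφ]
      refine Finset.sum_congr rfl fun i _ => ?_
      rw [ha, mul_comm]
      congr 1
      exact dif_pos hj
    · intro i hi
      rw [hJ, ha ⟨i, hi⟩]
      exact hg _

end Stmt9
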